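/- Fix ν ≥ 2 and positive integers s,t, let f_{i,j} ∈ L¹([-π,π]; ℂ^{s×t}) for i,j = 1,…,ν, and let A_n be the ν×ν block matrix with (i,j) block T_{n_i,n_j}(f_{i,j}) where n_1 = n_2 = ⋯ = n_ν = n(ν) = n/ν. For a positive integer μ define the permutation matrix Π_μ = ([rows I_ν ⊗ e_1ᵀ; I_ν ⊗ e_2ᵀ; …; I_ν ⊗ e_{n(ν)}ᵀ]) ⊗ I_μ, where e_k is the k-th canonical basis vector of ℂ^{n(ν)}. Then Π_s A_n Π_tᵀ = T_{n(ν)}(F), where F = (f_{i,j})_{i,j=1}^ν : [-π,π] → ℂ^{νs×νt}. Consequently {A_n}_n ∼_σ F, and if in addition F is Hermitian-valued (forcing s = t) then {A_n}_n ∼_λ F. -/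

import Mathlib

open MeasureTheory Filter Topology Matrix
open scoped Real

noncomputable section

/-- Sum of `F` over the eigenvalues (with multiplicity) of a square complex matrix,
the eigenvalues being the roots of the characteristic polynomial. -/
def eigSum {ι : Type*} [Fintype ι] [DecidableEq ι] (F : ℂ → ℂ) (A : Matrix ι ι ℂ) : ℂ :=
  (A.charpoly.roots.map F).sum

/-- Sum of `F` over the singular values `σ_1, …, σ_{min(#rows,#cols)}` of a rectangular
complex matrix: the singular values are the square roots of the eigenvalues of `A * Aᴴ`,
discarding the `#rows - min(#rows,#cols)` superfluous zero ones. -/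
def svSum {m n : Type*} [Fintype m] [Fintype n] [DecidableEq m]
    (F : ℝ → ℂ) (A : Matrix m n ℂ) : ℂ :=
  (∑ i, F (Real.sqrt ((Matrix.isHermitian_mul_conjTranspose_self A).eigenvalues i))) -
    ((Fintype.card m - min (Fintype.card m) (Fintype.card n) : ℕ) : ℂ) * F 0

/-- `{A_n}_n ∼_σ f` : the matrix-sequence `A` is distributed as the matrix-valued
symbol `f : Ω → ℂ^{ρ×τ}` in the sense of the singular values (Weyl sense). -/
def DistributedSV {Θ : Type*} [MeasureSpace Θ] (Ω : Set Θ)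
    {ρ τ : Type*} [Fintype ρ] [Fintype τ] [DecidableEq ρ]
    (f : Θ → Matrix ρ τ ℂ)
    {ι κ : ℕ → Type} [∀ n, Fintype (ι n)] [∀ n, Fintype (κ n)] [∀ n, DecidableEq (ι n)]
    (A : ∀ n, Matrix (ι n) (κ n) ℂ) : Prop :=
  ∀ F : ℝ → ℂ, Continuous F → HasCompactSupport F →
    Tendsto
      (fun n => ((min (Fintype.card (ι n)) (Fintype.card (κ n)) : ℕ) : ℂ)⁻¹ * svSum F (A n))
      atTop
      (𝓝 (((volume Ω).toReal : ℂ)⁻¹ *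
        ∫ θ in Ω, ((min (Fintype.card ρ) (Fintype.card τ) : ℕ) : ℂ)⁻¹ * svSum F (f θ)))

/-- `{A_n}_n ∼_λ f` : the matrix-sequence `A` is distributed as the matrix-valued
symbol `f : Ω → ℂ^{ρ×ρ}` in the sense of the eigenvalues (Weyl sense). -/
def DistributedEig {Θ : Type*} [MeasureSpace Θ] (Ω : Set Θ)
    {ρ : Type*} [Fintype ρ] [DecidableEq ρ]
    (f : Θ → Matrix ρ ρ ℂ)
    {ι : ℕ → Type} [∀ n, Fintype (ι n)] [∀ n, DecidableEq (ι n)]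
    (A : ∀ n, Matrix (ι n) (ι n) ℂ) : Prop :=
  ∀ F : ℂ → ℂ, Continuous F → HasCompactSupport F →
    Tendsto (fun n => ((Fintype.card (ι n) : ℕ) : ℂ)⁻¹ * eigSum F (A n)) atTop
      (𝓝 (((volume Ω).toReal : ℂ)⁻¹ *
        ∫ θ in Ω, ((Fintype.card ρ : ℕ) : ℂ)⁻¹ * eigSum F (f θ)))

/-- `{A_n}_n ∼_σ α I` (constant symbol `α I_s`, `α = 0` being the notion of a
zero-distributed matrix-sequence): the limit of the singular value averages is `F(α)`. -/
def DistributedSVConst (α : ℝ)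
    {ι κ : ℕ → Type} [∀ n, Fintype (ι n)] [∀ n, Fintype (κ n)] [∀ n, DecidableEq (ι n)]
    (A : ∀ n, Matrix (ι n) (κ n) ℂ) : Prop :=
  ∀ F : ℝ → ℂ, Continuous F → HasCompactSupport F →
    Tendsto
      (fun n => ((min (Fintype.card (ι n)) (Fintype.card (κ n)) : ℕ) : ℂ)⁻¹ * svSum F (A n))
      atTop (𝓝 (F α))

/-- `{A_n}_n ∼_λ α I` (constant symbol `α I_s`, `α` real): the limit of the eigenvalue
averages is `F(α)`. -/
def DistributedEigConst (α : ℝ)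
    {ι : ℕ → Type} [∀ n, Fintype (ι n)] [∀ n, DecidableEq (ι n)]
    (A : ∀ n, Matrix (ι n) (ι n) ℂ) : Prop :=
  ∀ F : ℂ → ℂ, Continuous F → HasCompactSupport F →
    Tendsto (fun n => ((Fintype.card (ι n) : ℕ) : ℂ)⁻¹ * eigSum F (A n)) atTop
      (𝓝 (F (α : ℂ)))

/-- The `k`-th Fourier coefficient (computed entrywise) of a matrix-valued function on
`[-π, π]`: `f̂_k = (1/2π) ∫_{-π}^{π} f(θ) e^{-ικθ} dθ`. -/
def fCoeff {ρ τ : Type*} (f : ℝ → Matrix ρ τ ℂ) (k : ℤ) : Matrix ρ τ ℂ :=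
  Matrix.of fun a b =>
    ((2 * π : ℝ) : ℂ)⁻¹ *
      ∫ θ in (-π : ℝ)..π, f θ a b * Complex.exp (-(Complex.I * (k : ℂ) * (θ : ℂ)))

/-- The (rectangular) block Toeplitz matrix `T_{n,n'}(f) = [f̂_{i-j}]`, of size
`sn × tn'` when `f` is `s × t` matrix-valued. -/
def blockToeplitz {ρ τ : Type*} (f : ℝ → Matrix ρ τ ℂ) (n n' : ℕ) :
    Matrix (Fin n × ρ) (Fin n' × τ) ℂ :=
  Matrix.of fun p q => fCoeff f (((p.1 : ℕ) : ℤ) - ((q.1 : ℕ) : ℤ)) p.2 q.2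

/-- The `ν × ν` block matrix `A_n` with equal block sizes `n(ν) = N`, whose `(i,j)`
block is the block Toeplitz matrix `T_N(f_{i,j})`; the row index `((i,k),a)` consists of
the block row `i`, the Toeplitz row `k` and the intra-block row `a`. -/
def blockMatEq (ν s t : ℕ) (f : Fin ν → Fin ν → ℝ → Matrix (Fin s) (Fin t) ℂ) (N : ℕ) :
    Matrix ((Fin ν × Fin N) × Fin s) ((Fin ν × Fin N) × Fin t) ℂ :=
  Matrix.of fun P Q =>
    fCoeff (f P.1.1 Q.1.1) (((P.1.2 : ℕ) : ℤ) - ((Q.1.2 : ℕ) : ℤ)) P.2 Q.2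

/-- The permutation matrix `Π_μ = [I_ν ⊗ e_1ᵀ; I_ν ⊗ e_2ᵀ; …; I_ν ⊗ e_Nᵀ] ⊗ I_μ`:
the stacked matrix has row index `(k,i)` (stack block `k`, row `i` of `I_ν ⊗ e_kᵀ`) and
column index `(j,l)`, with entry `(I_ν)_{ij} (e_kᵀ)_l`. -/
def permPi (ν N μ : ℕ) : Matrix ((Fin N × Fin ν) × Fin μ) ((Fin ν × Fin N) × Fin μ) ℂ :=
  Matrix.kroneckerMap (· * ·)
    (Matrix.of fun (p : Fin N × Fin ν) (q : Fin ν × Fin N) =>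
      if p.2 = q.1 ∧ p.1 = q.2 then (1 : ℂ) else 0)
    (1 : Matrix (Fin μ) (Fin μ) ℂ)

/-- The block Toeplitz matrix `T_N(F)` generated by the `νs × νt` matrix-valued symbol
`F = (f_{i,j})_{i,j=1}^ν`, with row index `((k,i),a)`: Toeplitz row `k` and row `(i,a)`
within the `νs × νt` Fourier coefficient `F̂_{k-l}`. -/
def toeplitzOfBlockSymbol (ν s t : ℕ)
    (f : Fin ν → Fin ν → ℝ → Matrix (Fin s) (Fin t) ℂ) (N : ℕ) :
    Matrix ((Fin N × Fin ν) × Fin s) ((Fin N × Fin ν) × Fin t) ℂ :=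
  Matrix.of fun P Q =>
    fCoeff (f P.1.2 Q.1.2) (((P.1.1 : ℕ) : ℤ) - ((Q.1.1 : ℕ) : ℤ)) P.2 Q.2

/-- The `νs × νt` matrix-valued symbol `F = (f_{i,j})_{i,j=1}^ν`. -/
def blockSymbol (ν s t : ℕ) (f : Fin ν → Fin ν → ℝ → Matrix (Fin s) (Fin t) ℂ) :
    ℝ → Matrix (Fin ν × Fin s) (Fin ν × Fin t) ℂ :=
  fun θ => Matrix.of fun p q => f p.1 q.1 θ p.2 q.2

/-!
The permutations only relabel indices, so `A_n` is a reindexing of the block Toeplitz matrix of `F`,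
and everything reduces to the distribution of `T_N(G)` for integrable matrix-valued symbols `G`.

*Hermitian `G`.* Linear combinations of `1` and of the resolvent functions `x ↦ (x - z)⁻¹`, `z` not
real, are dense in the continuous functions on the one-point compactification of the line, and the
eigenvalue averages are uniformly bounded functionals there. So it suffices to find the limit of
`N⁻¹ tr S`, where `S = T_N(g)⁻¹` and `g = G - z`; note `‖S‖ ≤ |Im z|⁻¹`. With `V_θ` the block column
with blocks `e^{-ikθ} I`, this normalized trace is the mean over `θ` of the trace of
`N⁻¹ V_θᴴ S V_θ`. The `m`-th Fourier coefficient of `V_θᴴ S V_θ g(θ)` is a sum of `N` terms, all but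
`|m|` of which are entries of `S T_N(g) = 1` by the Toeplitz structure, while the others are
`O(√N)`. Hence the Fourier coefficients of `N⁻¹ V_θᴴ S V_θ g(θ) - 1` tend to `0`; these functions
being dominated by an integrable one, their integrals against the bounded function `g⁻¹` tend
to `0` too, i.e. `N⁻¹ tr S` tends to the mean of `tr g⁻¹`.

*General symbols.* The Hermitian dilation `[[0, A], [Aᴴ, 0]]` turns singular values into eigenvalues
and commutes with forming block Toeplitz matrices, up to a reindexing.
-/

lemma exists_mem_span_fourier_integral_norm_sub_lt {T : ℝ} [Fact (0 < T)]
    {μ : Measure (AddCircle T)} [IsFiniteMeasure μ] {q : AddCircle T → ℂ} (hq : Integrable q μ)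
    {ε : ℝ} (hε : 0 < ε) :
    ∃ P ∈ Submodule.span ℂ (Set.range (fourier (T := T))), ∫ x, ‖q x - P x‖ ∂μ < ε := by
  obtain ⟨g, hqg, hg⟩ := hq.exists_boundedContinuous_integral_sub_le (half_pos hε)
  set δ := ε / 2 / (μ.real Set.univ + 1) with hδ
  have hg_mem : g.toContinuousMap ∈
      (Submodule.span ℂ (Set.range (fourier (T := T)))).topologicalClosure := by
    simp [span_fourier_closure_eq_top]
  obtain ⟨P, hP, hgP⟩ := Metric.mem_closure_iff.1 hg_mem δ (by positivity)
  have hPint : Integrable P μ := P.continuous.integrable_of_hasCompactSupport (.of_compactSpace _)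
  have hgP_le (x : AddCircle T) : ‖g x - P x‖ ≤ δ := by
    rw [← dist_eq_norm]
    exact (ContinuousMap.dist_apply_le_dist x).trans hgP.le
  have hδ_lt : μ.real Set.univ * δ < ε / 2 := by
    rw [hδ, mul_div_assoc', div_lt_iff₀ (by positivity), mul_comm]
    gcongr
    exact lt_add_one _
  refine ⟨P, hP, ?_⟩
  calc ∫ x, ‖q x - P x‖ ∂μ
      ≤ ∫ x, (‖q x - g x‖ + δ) ∂μ :=
        integral_mono (hq.sub hPint).norm ((hq.sub hg).norm.add (integrable_const _)) fun x =>
          (norm_sub_le_norm_sub_add_norm_sub _ (g x) _).trans (by gcongr; exact hgP_le x)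
    _ = ∫ x, ‖q x - g x‖ ∂μ + μ.real Set.univ * δ := by
        have h := integral_add (hq.sub hg).norm (integrable_const (μ := μ) δ)
        rwa [integral_const, smul_eq_mul] at h
    _ < ε / 2 + ε / 2 := add_lt_add_of_le_of_lt hqg hδ_lt
    _ = ε := add_halves ε

lemma exists_mem_span_fourier_setIntegral_mul_lt {T : ℝ} [Fact (0 < T)] {a : ℝ} {w : ℝ → ℝ}
    (hw : IntegrableOn w (Set.Ioc a (a + T))) {q : ℝ → ℂ}
    (hq : AEStronglyMeasurable q (volume.restrict (Set.Ioc a (a + T)))) {B : ℝ}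
    (hB : ∀ᵐ x ∂volume.restrict (Set.Ioc a (a + T)), ‖q x‖ ≤ B) {ε : ℝ} (hε : 0 < ε) :
    ∃ P ∈ Submodule.span ℂ (Set.range (fourier (T := T))),
      ∫ x in Set.Ioc a (a + T), ‖w x‖ * ‖q x - P x‖ < ε := by
  set ν := (volume.restrict (Set.Ioc a (a + T))).withDensity fun x => ENNReal.ofReal ‖w x‖ with hν
  have : IsFiniteMeasure ν := isFiniteMeasure_withDensity_ofReal hw.norm.2
  have hac : ν ≪ volume.restrict (Set.Ioc a (a + T)) := withDensity_absolutelyContinuous _ _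
  have hcoe : Measurable ((↑) : ℝ → AddCircle T) := AddCircle.measurable_mk'
  set qT : AddCircle T → ℂ := AddCircle.liftIoc T a (hq.mk q)
  have hqT : StronglyMeasurable qT :=
    (hq.stronglyMeasurable_mk.comp_measurable measurable_subtype_coe).comp_measurable
      (AddCircle.measurableEquivIoc T a).measurable
  have hqT_eq : ∀ᵐ x : ℝ ∂ν, qT x = q x := by
    filter_upwards [hac.ae_le hq.ae_eq_mk, hac.ae_le (ae_restrict_mem measurableSet_Ioc)]
      with x hx hx_mem
    rw [hx]
    exact AddCircle.liftIoc_coe_apply hx_mem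
  have hqT_int : Integrable qT (ν.map (↑)) :=
    (integrable_map_measure hqT.aestronglyMeasurable hcoe.aemeasurable).2 <|
      (Integrable.of_bound (hq.mono_ac hac) B (hac.ae_le hB)).congr (hqT_eq.mono fun _ => Eq.symm)
  obtain ⟨P, hP, hqP⟩ := exists_mem_span_fourier_integral_norm_sub_lt hqT_int hε
  refine ⟨P, hP, hqP.trans_eq' (Eq.symm ?_)⟩
  calc ∫ x in Set.Ioc a (a + T), ‖w x‖ * ‖q x - P x‖
      = ∫ x, ‖q x - P x‖ ∂ν := by
        rw [hν, integral_withDensity_eq_integral_toReal_smul₀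
          hw.1.norm.aemeasurable.ennreal_ofReal (by simp)]
        simp only [ENNReal.toReal_ofReal (norm_nonneg _), smul_eq_mul]
    _ = ∫ x : ℝ, ‖qT x - P x‖ ∂ν :=
        integral_congr_ae (hqT_eq.mono fun x hx => by simp only [hx])
    _ = ∫ x, ‖qT x - P x‖ ∂ν.map (↑) :=
        (integral_map hcoe.aemeasurable
          (hqT.sub P.continuous.stronglyMeasurable).norm.aestronglyMeasurable).symm

lemma tendsto_integral_mul_of_mem_span_fourier {ι : Type*} {l : Filter ι}
    {K : ι → ℝ → ℂ} (hK : ∀ i, IntervalIntegrable (K i) volume (-π) π)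
    (hlim : ∀ m : ℤ, Tendsto
      (fun i => ∫ θ in (-π)..π, K i θ * Complex.exp (-(Complex.I * m * θ))) l (𝓝 0))
    {P : C(AddCircle (2 * π), ℂ)}
    (hP : P ∈ Submodule.span ℂ (Set.range (fourier (T := 2 * π)))) :
    Tendsto (fun i => ∫ θ in (-π)..π, K i θ * P θ) l (𝓝 0) := by
  have hKP (P : C(AddCircle (2 * π), ℂ)) (i : ι) :
      IntervalIntegrable (fun θ : ℝ => K i θ * P θ) volume (-π) π :=
    (hK i).mul_continuousOn (P.continuous.comp (AddCircle.continuous_mk' _)).continuousOn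
  induction hP using Submodule.span_induction with
  | mem P hP =>
    obtain ⟨m, rfl⟩ := hP
    refine (hlim (-m)).congr fun i => intervalIntegral.integral_congr fun θ _ => ?_
    have hπ : (π : ℂ) ≠ 0 := mod_cast Real.pi_ne_zero
    simp only [fourier_coe_apply]
    congr 2
    push_cast
    field_simp
  | zero => simpa using tendsto_const_nhds
  | add P Q _ _ hP hQ =>
    refine (add_zero (0 : ℂ) ▸ hP.add hQ).congr fun i => ?_
    simp only [ContinuousMap.add_apply, mul_add]
    exact (intervalIntegral.integral_add (hKP P i) (hKP Q i)).symm
  | smul c P _ hP =>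
    refine (mul_zero c ▸ hP.const_mul c).congr fun i => ?_
    simp only [ContinuousMap.smul_apply, smul_eq_mul, mul_left_comm _ c,
      intervalIntegral.integral_const_mul]

lemma dist_integral_mul_le_integral_norm_mul {α : Type*} [MeasurableSpace α] {μ : Measure α}
    {K p q : α → ℂ} {w : α → ℝ} (hw : Integrable w μ) (hK : AEStronglyMeasurable K μ)
    (hKw : ∀ x, ‖K x‖ ≤ ‖w x‖) {B C : ℝ} (hp : AEStronglyMeasurable p μ)
    (hpB : ∀ᵐ x ∂μ, ‖p x‖ ≤ B) (hq : AEStronglyMeasurable q μ) (hqC : ∀ᵐ x ∂μ, ‖q x‖ ≤ C) :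
    dist (∫ x, K x * p x ∂μ) (∫ x, K x * q x ∂μ) ≤ ∫ x, ‖w x‖ * ‖p x - q x‖ ∂μ := by
  have hKint : Integrable K μ := hw.mono hK (.of_forall hKw)
  have hpq : ∀ᵐ x ∂μ, ‖‖p x - q x‖‖ ≤ B + C := by
    filter_upwards [hpB, hqC] with x hpx hqx
    simpa using (norm_sub_le _ _).trans (add_le_add hpx hqx)
  rw [dist_eq_norm, ← integral_sub (hKint.mul_bdd hp hpB) (hKint.mul_bdd hq hqC)]
  refine norm_integral_le_of_norm_le (hw.norm.mul_bdd (hp.sub hq).norm hpq)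
    (.of_forall fun x => ?_)
  rw [← mul_sub, norm_mul]
  gcongr
  exact hKw x

lemma tendsto_integral_mul_of_tendsto_fourier {ι : Type*} {l : Filter ι}
    {K : ι → ℝ → ℂ} {w : ℝ → ℝ} (hw : IntervalIntegrable w volume (-π) π)
    (hK : ∀ i, IntervalIntegrable (K i) volume (-π) π) (hKw : ∀ i θ, ‖K i θ‖ ≤ ‖w θ‖)
    (hlim : ∀ m : ℤ, Tendsto
      (fun i => ∫ θ in (-π)..π, K i θ * Complex.exp (-(Complex.I * m * θ))) l (𝓝 0))
    {q : ℝ → ℂ} (hq : AEStronglyMeasurable q (volume.restrict (Set.Ioc (-π) π))) {B : ℝ}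
    (hB : ∀ᵐ θ ∂volume.restrict (Set.Ioc (-π) π), ‖q θ‖ ≤ B) :
    Tendsto (fun i => ∫ θ in (-π)..π, K i θ * q θ) l (𝓝 0) := by
  have hT : Fact (0 < 2 * π) := ⟨Real.two_pi_pos⟩
  have hI : Set.Ioc (-π) (-π + 2 * π) = Set.Ioc (-π) π := by ring_nf
  rw [intervalIntegrable_iff_integrableOn_Ioc_of_le (neg_le_self Real.pi_pos.le)] at hw
  refine Metric.tendsto_nhds.2 fun ε hε => ?_
  obtain ⟨P, hP, hqP⟩ := exists_mem_span_fourier_setIntegral_mul_lt (a := -π)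
    (by rwa [hI]) (by rwa [hI]) (by rwa [hI]) (half_pos hε)
  have hP_cont : Continuous fun θ : ℝ => P θ := P.continuous.comp (AddCircle.continuous_mk' _)
  filter_upwards [Metric.tendsto_nhds.1 (tendsto_integral_mul_of_mem_span_fourier hK hlim hP) _
    (half_pos hε)] with i hi
  have hqP_dist := dist_integral_mul_le_integral_norm_mul hw (hK i).1.1 (hKw i) hq hB
    hP_cont.aestronglyMeasurable (.of_forall fun θ => P.norm_coe_le_norm θ)
  simp only [← intervalIntegral.integral_of_le (neg_le_self Real.pi_pos.le)] at hqP_dist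
  rw [hI, ← intervalIntegral.integral_of_le (neg_le_self Real.pi_pos.le)] at hqP
  exact (dist_triangle _ _ _).trans_lt (by linarith)

lemma intervalIntegrable_finsetSum {ι E : Type*} [NormedAddCommGroup E] {μ : Measure ℝ} {a b : ℝ}
    (s : Finset ι) {f : ι → ℝ → E} (hf : ∀ i ∈ s, IntervalIntegrable (f i) μ a b) :
    IntervalIntegrable (fun x => ∑ i ∈ s, f i x) μ a b := by
  simpa only [Finset.sum_fn] using IntervalIntegrable.sum s hf

lemma intervalIntegrable_mul_exp {u : ℝ → ℂ} (hu : IntervalIntegrable u volume (-π) π) (k : ℤ) :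
    IntervalIntegrable (fun θ => u θ * Complex.exp (-(Complex.I * k * θ))) volume (-π) π :=
  hu.mul_continuousOn (by fun_prop)

section FourierCoefficients

variable {ρ τ : Type*} {f g : ℝ → Matrix ρ τ ℂ}

lemma fCoeff_sub (hf : ∀ a b, IntervalIntegrable (fun θ => f θ a b) volume (-π) π)
    (hg : ∀ a b, IntervalIntegrable (fun θ => g θ a b) volume (-π) π) (k : ℤ) :
    fCoeff (fun θ => f θ - g θ) k = fCoeff f k - fCoeff g k := by
  ext a b
  simp only [fCoeff, of_apply, Matrix.sub_apply, sub_mul, ← mul_sub]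
  rw [intervalIntegral.integral_sub (intervalIntegrable_mul_exp (hf a b) k)
    (intervalIntegrable_mul_exp (hg a b) k)]

lemma fCoeff_smul (c : ℂ) (f : ℝ → Matrix ρ τ ℂ) (k : ℤ) :
    fCoeff (fun θ => c • f θ) k = c • fCoeff f k := by
  ext a b
  simp only [fCoeff, of_apply, Matrix.smul_apply, smul_eq_mul, mul_assoc, mul_left_comm _ c,
    intervalIntegral.integral_const_mul]

lemma fCoeff_conjTranspose (f : ℝ → Matrix ρ τ ℂ) (k : ℤ) :
    fCoeff (fun θ => (f θ)ᴴ) k = (fCoeff f (-k))ᴴ := by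
  ext a b
  simp only [fCoeff, of_apply, conjTranspose_apply, star_mul', Complex.star_def, map_inv₀,
    Complex.conj_ofReal, ← intervalIntegral.intervalIntegral_conj, map_mul, ← Complex.exp_conj]
  simp

lemma integral_exp_neg_I_mul (k : ℤ) :
    ∫ θ in (-π)..π, Complex.exp (-(Complex.I * k * θ)) = if k = 0 then (2 * π : ℂ) else 0 := by
  split_ifs with hk
  · simp [hk, two_mul]
  · have hc : -(Complex.I * k) ≠ 0 := by simpa using hk
    have hperiod : Complex.exp (-(Complex.I * k) * π) =
        Complex.exp (-(Complex.I * k) * (-π : ℝ)) :=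
      Complex.exp_eq_exp_iff_exists_int.2 ⟨-k, by push_cast; ring⟩
    simp only [← neg_mul (Complex.I * k), integral_exp_mul_complex hc, hperiod, sub_self, zero_div]

lemma fCoeff_one_apply [DecidableEq ρ] (k : ℤ) (a b : ρ) :
    fCoeff (fun _ => (1 : Matrix ρ ρ ℂ)) k a b = if k = 0 ∧ a = b then 1 else 0 := by
  have hπ : (π : ℂ) ≠ 0 := mod_cast Real.pi_ne_zero
  simp only [fCoeff, of_apply, intervalIntegral.integral_const_mul, integral_exp_neg_I_mul,
    Matrix.one_apply, ite_and]
  split_ifs with hab hk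
  · push_cast
    field_simp
  all_goals simp

end FourierCoefficients

section BlockToeplitz

variable {ρ τ : Type*}

lemma blockToeplitz_conjTranspose (f : ℝ → Matrix ρ τ ℂ) (n n' : ℕ) :
    (blockToeplitz f n n')ᴴ = blockToeplitz (fun θ => (f θ)ᴴ) n' n := by
  ext p q
  simp only [blockToeplitz, of_apply, conjTranspose_apply, fCoeff_conjTranspose, neg_sub]

lemma blockToeplitz_one [DecidableEq ρ] (N : ℕ) :
    blockToeplitz (fun _ => (1 : Matrix ρ ρ ℂ)) N N = 1 := by
  ext p q
  simp only [blockToeplitz, of_apply, fCoeff_one_apply, Matrix.one_apply, Prod.ext_iff, Fin.ext_iff,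
    sub_eq_zero, Nat.cast_inj]

lemma blockToeplitz_sub_smul_one [DecidableEq ρ] {G : ℝ → Matrix ρ ρ ℂ}
    (hG : ∀ a b, IntervalIntegrable (fun θ => G θ a b) volume (-π) π) (z : ℂ) (N : ℕ) :
    blockToeplitz (fun θ => G θ - z • 1) N N = blockToeplitz G N N - z • 1 := by
  rw [← blockToeplitz_one]
  ext p q
  simp only [blockToeplitz, of_apply, Matrix.sub_apply, Matrix.smul_apply]
  rw [fCoeff_sub (g := fun _ => z • 1) hG fun _ _ => intervalIntegrable_const, fCoeff_smul]
  rfl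

end BlockToeplitz

section CovariantSymbol

variable {ρ τ : Type*} [DecidableEq ρ]

/-- The block column `V_θ` with blocks `e^{-ikθ} I`, `0 ≤ k < N`, for which
`blockToeplitz g N N` is the average of `V_θ g(θ) V_θᴴ` over `θ ∈ [-π, π]`. -/
def fourierColumn (ρ : Type*) [DecidableEq ρ] (N : ℕ) (θ : ℝ) : Matrix (Fin N × ρ) ρ ℂ :=
  Matrix.of fun p a => if p.2 = a then Complex.exp (-(Complex.I * ((p.1 : ℕ) : ℤ) * θ)) else 0

variable [Fintype ρ] {N : ℕ}

lemma fourierColumn_mul_apply (θ : ℝ) (M : Matrix ρ τ ℂ) (p : Fin N × ρ) (b : τ) :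
    (fourierColumn ρ N θ * M) p b = Complex.exp (-(Complex.I * ((p.1 : ℕ) : ℤ) * θ)) * M p.2 b := by
  simp [fourierColumn, Matrix.mul_apply]

lemma conjTranspose_fourierColumn_mul_apply (θ : ℝ) (M : Matrix (Fin N × ρ) τ ℂ) (a : ρ) (b : τ) :
    ((fourierColumn ρ N θ)ᴴ * M) a b =
      ∑ k : Fin N, Complex.exp (Complex.I * ((k : ℕ) : ℤ) * θ) * M (k, a) b := by
  simp [fourierColumn, Matrix.mul_apply, Fintype.sum_prod_type, apply_ite, ← Complex.exp_conj]

lemma conjTranspose_fourierColumn_mul_self (θ : ℝ) :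
    (fourierColumn ρ N θ)ᴴ * fourierColumn ρ N θ = (N : ℂ) • 1 := by
  ext a b
  rw [conjTranspose_fourierColumn_mul_apply]
  simp [fourierColumn, Matrix.one_apply, ← Complex.exp_add]

/-- The covariant (Berezin) symbol `θ ↦ V_θᴴ U V_θ` of a matrix `U`; it is dual to
`g ↦ blockToeplitz g N N` under the trace pairing. -/
def covariantSymbol (U : Matrix (Fin N × ρ) (Fin N × ρ) ℂ) (θ : ℝ) : Matrix ρ ρ ℂ :=
  (fourierColumn ρ N θ)ᴴ * U * fourierColumn ρ N θ

lemma covariantSymbol_mul_apply_mul_exp (U : Matrix (Fin N × ρ) (Fin N × ρ) ℂ) (M : Matrix ρ τ ℂ)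
    (m : ℤ) (θ : ℝ) (a : ρ) (b : τ) :
    (covariantSymbol U θ * M) a b * Complex.exp (-(Complex.I * m * θ)) =
      ∑ k : Fin N, ∑ p, U (k, a) p * (M p.2 b *
        Complex.exp (-(Complex.I * ((((p.1 : ℕ) : ℤ) - (k : ℕ) + m : ℤ) : ℂ) * θ))) := by
  rw [covariantSymbol, Matrix.mul_assoc, Matrix.mul_assoc, conjTranspose_fourierColumn_mul_apply,
    Finset.sum_mul]
  refine Finset.sum_congr rfl fun k _ => ?_
  rw [Matrix.mul_apply, Finset.mul_sum, Finset.sum_mul]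
  refine Finset.sum_congr rfl fun p _ => ?_
  have hexp : Complex.exp (-(Complex.I * ((((p.1 : ℕ) : ℤ) - (k : ℕ) + m : ℤ) : ℂ) * θ)) =
      Complex.exp (Complex.I * ((k : ℕ) : ℤ) * θ) *
        Complex.exp (-(Complex.I * ((p.1 : ℕ) : ℤ) * θ)) * Complex.exp (-(Complex.I * m * θ)) := by
    rw [← Complex.exp_add, ← Complex.exp_add]
    push_cast
    ring_nf
  rw [fourierColumn_mul_apply, hexp]
  ring

lemma fCoeff_covariantSymbol_mul (U : Matrix (Fin N × ρ) (Fin N × ρ) ℂ) {g : ℝ → Matrix ρ τ ℂ}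
    (hg : ∀ a b, IntervalIntegrable (fun θ => g θ a b) volume (-π) π) (m : ℤ) (a : ρ) (b : τ) :
    fCoeff (fun θ => covariantSymbol U θ * g θ) m a b =
      ∑ k : Fin N, ∑ p, U (k, a) p * fCoeff g (((p.1 : ℕ) : ℤ) - (k : ℕ) + m) p.2 b := by
  have hInt (k : Fin N) (p : Fin N × ρ) := (intervalIntegrable_mul_exp (hg p.2 b)
    (((p.1 : ℕ) : ℤ) - (k : ℕ) + m)).const_mul (U (k, a) p)
  simp only [fCoeff, of_apply, covariantSymbol_mul_apply_mul_exp]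
  rw [intervalIntegral.integral_finsetSum fun k _ =>
    intervalIntegrable_finsetSum _ fun p _ => hInt k p, Finset.mul_sum]
  refine Finset.sum_congr rfl fun k _ => ?_
  rw [intervalIntegral.integral_finsetSum fun p _ => hInt k p, Finset.mul_sum]
  refine Finset.sum_congr rfl fun p _ => ?_
  rw [intervalIntegral.integral_const_mul, mul_left_comm]

lemma continuous_covariantSymbol (U : Matrix (Fin N × ρ) (Fin N × ρ) ℂ) :
    Continuous (covariantSymbol U) := by
  have hV : Continuous (fourierColumn ρ N) :=
    continuous_matrix fun p a => by simp only [fourierColumn, of_apply]; split_ifs <;> fun_prop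
  exact (hV.matrix_conjTranspose.matrix_mul continuous_const).matrix_mul hV

lemma trace_eq_integral_trace_covariantSymbol (U : Matrix (Fin N × ρ) (Fin N × ρ) ℂ) :
    U.trace = ((2 * π : ℝ) : ℂ)⁻¹ * ∫ θ in (-π)..π, (covariantSymbol U θ).trace := by
  have hdiag (a : ρ) : ∑ k : Fin N, U (k, a) (k, a) =
      ((2 * π : ℝ) : ℂ)⁻¹ * ∫ θ in (-π)..π, covariantSymbol U θ a a := by
    have h := fCoeff_covariantSymbol_mul U (g := fun _ => (1 : Matrix ρ ρ ℂ))
      (fun _ _ => intervalIntegrable_const) 0 a a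
    have hδ (k : Fin N) (p : Fin N × ρ) :
        fCoeff (fun _ => (1 : Matrix ρ ρ ℂ)) (((p.1 : ℕ) : ℤ) - (k : ℕ) + 0) p.2 a =
          if p = (k, a) then 1 else 0 := by
      simp only [fCoeff_one_apply, Prod.ext_iff, Fin.ext_iff, add_zero, sub_eq_zero, Nat.cast_inj]
    simp only [hδ, mul_ite, mul_one, mul_zero, Finset.sum_ite_eq', Finset.mem_univ, if_true] at h
    simpa [fCoeff] using h.symm
  have hInt (a : ρ) : IntervalIntegrable (fun θ => covariantSymbol U θ a a) volume (-π) π :=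
    ((continuous_covariantSymbol U).matrix_elem a a).intervalIntegrable _ _
  simp only [trace, diag_apply, Fintype.sum_prod_type_right, hdiag, Finset.mul_sum,
    intervalIntegral.integral_finsetSum fun a _ => hInt a]

open scoped Matrix.Norms.L2Operator

lemma norm_fourierColumn_le (θ : ℝ) : ‖fourierColumn ρ N θ‖ ≤ √N := by
  refine Real.le_sqrt_of_sq_le ?_
  rw [sq, ← l2_opNorm_conjTranspose_mul_self, conjTranspose_fourierColumn_mul_self, norm_smul,
    ← diagonal_one, l2_opNorm_diagonal]
  simpa using mul_le_mul_of_nonneg_left (pi_norm_const_le (1 : ℂ)) N.cast_nonneg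

lemma norm_covariantSymbol_le (U : Matrix (Fin N × ρ) (Fin N × ρ) ℂ) (θ : ℝ) :
    ‖covariantSymbol U θ‖ ≤ N * ‖U‖ := by
  calc ‖covariantSymbol U θ‖
      ≤ ‖(fourierColumn ρ N θ)ᴴ‖ * ‖U‖ * ‖fourierColumn ρ N θ‖ :=
        (l2_opNorm_mul _ _).trans (by gcongr; exact l2_opNorm_mul _ _)
    _ ≤ √N * ‖U‖ * √N := by
        rw [l2_opNorm_conjTranspose]
        gcongr <;> exact norm_fourierColumn_le θ
    _ = N * ‖U‖ := by rw [mul_right_comm, Real.mul_self_sqrt (Nat.cast_nonneg N)]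

end CovariantSymbol

section StableInverse

open scoped Matrix.Norms.L2Operator

lemma norm_mulVec_apply_le {m n : Type*} [Fintype m] [Fintype n] [DecidableEq n]
    (U : Matrix m n ℂ) (x : n → ℂ) (i : m) :
    ‖(U *ᵥ x) i‖ ≤ ‖U‖ * (√(Fintype.card n) * ‖x‖) := by
  have hx : ‖WithLp.toLp 2 x‖ ≤ √(Fintype.card n) * ‖x‖ := by
    have h := (PiLp.lipschitzWith_toLp 2 fun _ : n => ℂ).dist_le_mul x 0
    simpa [Real.sqrt_eq_rpow] using h
  calc ‖(U *ᵥ x) i‖ ≤ ‖WithLp.toLp 2 (U *ᵥ x)‖ := PiLp.norm_apply_le (WithLp.toLp 2 (U *ᵥ x)) i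
    _ ≤ ‖U‖ * ‖WithLp.toLp 2 x‖ := U.l2_opNorm_mulVec (WithLp.toLp 2 x)
    _ ≤ ‖U‖ * (√(Fintype.card n) * ‖x‖) := by gcongr

lemma norm_apply_le_l2_opNorm {m n : Type*} [Fintype m] [Fintype n] [DecidableEq n]
    (U : Matrix m n ℂ) (i : m) (j : n) : ‖U i j‖ ≤ ‖U‖ := by
  let e : EuclideanSpace ℂ n := EuclideanSpace.single j 1
  calc ‖U i j‖ = ‖(U *ᵥ e.ofLp) i‖ := by simp [e]
    _ ≤ ‖WithLp.toLp 2 (U *ᵥ e.ofLp)‖ := PiLp.norm_apply_le (WithLp.toLp 2 (U *ᵥ e.ofLp)) i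
    _ ≤ ‖U‖ * ‖e‖ := U.l2_opNorm_mulVec e
    _ = ‖U‖ := by simp [e]

lemma norm_fCoeff_apply_le {ρ τ : Type*} (g : ℝ → Matrix ρ τ ℂ) (m : ℤ) (a : ρ) (b : τ) :
    ‖fCoeff g m a b‖ ≤ (2 * π)⁻¹ * ∫ θ in (-π)..π, ‖g θ a b‖ := by
  have hexp (θ : ℝ) : ‖Complex.exp (-(Complex.I * m * θ))‖ = 1 := by simp [Complex.norm_exp]
  simp only [fCoeff, of_apply, norm_mul, norm_inv, Complex.norm_of_nonneg Real.two_pi_pos.le]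
  gcongr
  simpa only [norm_mul, hexp, mul_one] using
    intervalIntegral.norm_integral_le_integral_norm (neg_le_self Real.pi_pos.le)
      (f := fun θ => g θ a b * Complex.exp (-(Complex.I * m * θ)))

lemma exists_norm_fCoeff_apply_le {ρ τ : Type*} [Finite ρ] [Finite τ] (g : ℝ → Matrix ρ τ ℂ) :
    ∃ M, ∀ m a b, ‖fCoeff g m a b‖ ≤ M := by
  obtain ⟨M, hM⟩ := (Set.finite_range fun ab : ρ × τ =>
    (2 * π)⁻¹ * ∫ θ in (-π)..π, ‖g θ ab.1 ab.2‖).bddAbove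
  exact ⟨M, fun m a b => (norm_fCoeff_apply_le g m a b).trans (hM ⟨(a, b), rfl⟩)⟩

lemma card_filter_sub_notMem_Ico_le (N : ℕ) (m : ℤ) :
    (Finset.univ.filter fun k : Fin N => (k : ℤ) - m ∉ Set.Ico 0 (N : ℤ)).card ≤ m.natAbs := by
  rw [← Finset.card_range m.natAbs]
  refine Finset.card_le_card_of_injOn (fun k => if 0 ≤ m then (k : ℕ) else N - 1 - k)
    (fun k hk => ?_) fun k _ l _ hkl => ?_
  · simp only [Set.mem_Ico, Finset.coe_filter, Finset.mem_univ, true_and, Set.mem_ofPred_eq] at hk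
    simp only [Finset.coe_range, Set.mem_Iio]
    split_ifs <;> omega
  · simp only at hkl
    split_ifs at hkl <;> omega

variable {ρ : Type*} [Fintype ρ] [DecidableEq ρ] {g : ℝ → Matrix ρ ρ ℂ} {N : ℕ}
  {S : Matrix (Fin N × ρ) (Fin N × ρ) ℂ}

lemma sum_mul_fCoeff_of_mul_blockToeplitz_eq_one (hS : S * blockToeplitz g N N = 1) {m : ℤ}
    {k : Fin N} (hk : (k : ℤ) - m ∈ Set.Ico 0 (N : ℤ)) (a b : ρ) :
    ∑ p, S (k, a) p * fCoeff g (((p.1 : ℕ) : ℤ) - (k : ℕ) + m) p.2 b =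
      fCoeff (fun _ => (1 : Matrix ρ ρ ℂ)) m a b := by
  obtain ⟨l, hl⟩ : ∃ l : Fin N, ((l : ℕ) : ℤ) = k - m :=
    ⟨⟨((k : ℤ) - m).toNat, by have := hk.1; have := hk.2; omega⟩, Int.toNat_of_nonneg hk.1⟩
  have hkl : k = l ↔ m = 0 := by rw [Fin.ext_iff]; omega
  have h := congr_fun₂ hS (k, a) (l, b)
  simp only [Matrix.mul_apply, blockToeplitz, of_apply, hl, sub_sub_eq_add_sub, Matrix.one_apply,
    Prod.mk.injEq, hkl] at h
  simpa only [fCoeff_one_apply, sub_add_eq_add_sub] using h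

lemma norm_fCoeff_covariantSymbol_mul_sub_le
    (hg : ∀ a b, IntervalIntegrable (fun θ => g θ a b) volume (-π) π) {M : ℝ}
    (hM : ∀ m a b, ‖fCoeff g m a b‖ ≤ M) (hS : S * blockToeplitz g N N = 1) (m : ℤ) (a b : ρ) :
    ‖fCoeff (fun θ => covariantSymbol S θ * g θ) m a b - N * fCoeff (fun _ => 1) m a b‖ ≤
      m.natAbs * (‖S‖ * (√(N * Fintype.card ρ) * M)) := by
  set δ := fCoeff (fun _ => (1 : Matrix ρ ρ ℂ)) m a b with hδ
  let x (k : Fin N) (p : Fin N × ρ) : ℂ := fCoeff g (((p.1 : ℕ) : ℤ) - (k : ℕ) + m) p.2 b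
  have hgood (k : Fin N) (hk : (k : ℤ) - m ∈ Set.Ico 0 (N : ℤ)) : (S *ᵥ x k) (k, a) = δ :=
    sum_mul_fCoeff_of_mul_blockToeplitz_eq_one hS hk a b
  have hbad (k : Fin N) (hk : (k : ℤ) - m ∉ Set.Ico 0 (N : ℤ)) :
      ‖(S *ᵥ x k) (k, a) - δ‖ ≤ ‖S‖ * (√(N * Fintype.card ρ) * M) := by
    have hm : m ≠ 0 := by rintro rfl; simp at hk
    have hx : ‖x k‖ ≤ M :=
      (pi_norm_le_iff_of_nonneg ((norm_nonneg _).trans (hM 0 a b))).2 fun p => hM _ _ _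
    have hS' := norm_mulVec_apply_le S (x k) (k, a)
    rw [Fintype.card_prod, Fintype.card_fin, Nat.cast_mul] at hS'
    rw [hδ, fCoeff_one_apply, if_neg (fun h => hm h.1), sub_zero]
    exact hS'.trans (by gcongr)
  have hsum : fCoeff (fun θ => covariantSymbol S θ * g θ) m a b - N * δ =
      ∑ k ∈ Finset.univ.filter fun k : Fin N => (k : ℤ) - m ∉ Set.Ico 0 (N : ℤ),
        ((S *ᵥ x k) (k, a) - δ) := by
    have hsupp (k : Fin N) (hk : (S *ᵥ x k) (k, a) - δ ≠ 0) : (k : ℤ) - m ∉ Set.Ico 0 (N : ℤ) :=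
      fun hmem => hk (sub_eq_zero.2 (hgood k hmem))
    rw [Finset.sum_filter_of_ne fun k _ => hsupp k, Finset.sum_sub_distrib,
      fCoeff_covariantSymbol_mul S hg]
    simp [x, mulVec, dotProduct]
  rw [hsum]
  calc _ ≤ (Finset.univ.filter fun k : Fin N => (k : ℤ) - m ∉ Set.Ico 0 (N : ℤ)).card *
        (‖S‖ * (√(N * Fintype.card ρ) * M)) := by
        simpa using norm_sum_le_of_le _ fun k hk => hbad k (Finset.mem_filter.1 hk).2
    _ ≤ m.natAbs * (‖S‖ * (√(N * Fintype.card ρ) * M)) := by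
        have hM0 : 0 ≤ M := (norm_nonneg _).trans (hM 0 a b)
        gcongr
        exact card_filter_sub_notMem_Ico_le N m

end StableInverse

section TraceAsymptotics

open scoped Matrix.Norms.L2Operator

variable {ρ : Type*} [Fintype ρ] [DecidableEq ρ] {g q : ℝ → Matrix ρ ρ ℂ}
  {S : ∀ N, Matrix (Fin N × ρ) (Fin N × ρ) ℂ} {C : ℝ}

lemma tendsto_fCoeff_inv_smul_covariantSymbol_mul
    (hg : ∀ a b, IntervalIntegrable (fun θ => g θ a b) volume (-π) π) (hC : ∀ N, ‖S N‖ ≤ C)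
    (hS : ∀ N, S N * blockToeplitz g N N = 1) (m : ℤ) (a b : ρ) :
    Tendsto (fun N : ℕ => (N : ℂ)⁻¹ * fCoeff (fun θ => covariantSymbol (S N) θ * g θ) m a b) atTop
      (𝓝 (fCoeff (fun _ => 1) m a b)) := by
  obtain ⟨M, hM⟩ := exists_norm_fCoeff_apply_le g
  have hM0 : 0 ≤ M := (norm_nonneg _).trans (hM 0 a b)
  have hbound (N : ℕ) (hN : N ≠ 0) :
      dist ((N : ℂ)⁻¹ * fCoeff (fun θ => covariantSymbol (S N) θ * g θ) m a b)
        (fCoeff (fun _ => 1) m a b) ≤ m.natAbs * (C * (√(Fintype.card ρ) * M)) * (√N)⁻¹ := by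
    have hN' : (N : ℂ) ≠ 0 := mod_cast hN
    calc _ = (N : ℝ)⁻¹ * ‖fCoeff (fun θ => covariantSymbol (S N) θ * g θ) m a b -
          N * fCoeff (fun _ => 1) m a b‖ := by
          rw [dist_eq_norm, ← norm_natCast (α := ℂ) N, ← norm_inv, ← norm_mul, mul_sub,
            inv_mul_cancel_left₀ hN']
      _ ≤ (N : ℝ)⁻¹ * (m.natAbs * (C * (√(N * Fintype.card ρ) * M))) := by
          gcongr
          exact (norm_fCoeff_covariantSymbol_mul_sub_le hg hM (hS N) m a b).trans
            (by gcongr; exact hC N)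
      _ = _ := by
          rw [Real.sqrt_mul N.cast_nonneg, ← Real.sqrt_div_self]
          ring
  have hlim : Tendsto (fun N : ℕ => m.natAbs * (C * (√(Fintype.card ρ) * M)) * (√N)⁻¹) atTop
      (𝓝 0) := by
    simpa using (tendsto_inv_atTop_zero.comp
      (Real.tendsto_sqrt_atTop.comp tendsto_natCast_atTop_atTop)).const_mul
        (m.natAbs * (C * (√(Fintype.card ρ) * M)))
  exact tendsto_iff_dist_tendsto_zero.2 (squeeze_zero' (.of_forall fun _ => dist_nonneg)
    ((eventually_ne_atTop 0).mono hbound) hlim)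

lemma norm_inv_smul_covariantSymbol_mul_sub_one_apply_le {N : ℕ}
    (U : Matrix (Fin N × ρ) (Fin N × ρ) ℂ) (hU : ‖U‖ ≤ C) (M : Matrix ρ ρ ℂ) (θ : ℝ) (a b : ρ) :
    ‖((N : ℂ)⁻¹ • (covariantSymbol U θ * M) - 1) a b‖ ≤ C * ∑ c, ‖M c b‖ + 1 := by
  have hcov (c : ρ) : ‖((N : ℂ)⁻¹ • covariantSymbol U θ) a c‖ ≤ C := by
    refine (norm_apply_le_l2_opNorm _ a c).trans ?_
    rw [norm_smul, norm_inv, Complex.norm_natCast]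
    refine (mul_le_mul_of_nonneg_left (norm_covariantSymbol_le U θ) (by positivity)).trans ?_
    rcases N.eq_zero_or_pos with rfl | hN
    · simpa using (norm_nonneg U).trans hU
    · rwa [inv_mul_cancel_left₀ (by positivity)]
  refine (norm_sub_le _ _).trans (add_le_add ?_ ?_)
  · rw [← smul_mul_assoc, Matrix.mul_apply, Finset.mul_sum]
    refine norm_sum_le_of_le _ fun c _ => ?_
    rw [norm_mul]
    gcongr
    exact hcov c
  · rw [Matrix.one_apply]
    split_ifs <;> simp

lemma intervalIntegrable_covariantSymbol_mul_apply {N : ℕ} (U : Matrix (Fin N × ρ) (Fin N × ρ) ℂ)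
    (hg : ∀ a b, IntervalIntegrable (fun θ => g θ a b) volume (-π) π) (a b : ρ) :
    IntervalIntegrable (fun θ => (covariantSymbol U θ * g θ) a b) volume (-π) π := by
  simp only [Matrix.mul_apply]
  exact intervalIntegrable_finsetSum _ fun c _ =>
    (hg c b).continuousOn_mul ((continuous_covariantSymbol U).matrix_elem a c).continuousOn

lemma tendsto_integral_inv_smul_covariantSymbol_mul_sub_one_mul_exp
    (hg : ∀ a b, IntervalIntegrable (fun θ => g θ a b) volume (-π) π) (hC : ∀ N, ‖S N‖ ≤ C)
    (hS : ∀ N, S N * blockToeplitz g N N = 1) (m : ℤ) (a b : ρ) :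
    Tendsto (fun N : ℕ => ∫ θ in (-π)..π, ((N : ℂ)⁻¹ • (covariantSymbol (S N) θ * g θ) - 1) a b *
      Complex.exp (-(Complex.I * m * θ))) atTop (𝓝 0) := by
  have hcoeff (N : ℕ) : ∫ θ in (-π)..π, ((N : ℂ)⁻¹ • (covariantSymbol (S N) θ * g θ) - 1) a b *
      Complex.exp (-(Complex.I * m * θ)) = ((2 * π : ℝ) : ℂ) *
        ((N : ℂ)⁻¹ * fCoeff (fun θ => covariantSymbol (S N) θ * g θ) m a b -
          fCoeff (fun _ => 1) m a b) := by
    have h := congr_fun₂ (fCoeff_sub (f := fun θ => (N : ℂ)⁻¹ • (covariantSymbol (S N) θ * g θ))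
      (g := fun _ => 1) (fun a b =>
        (intervalIntegrable_covariantSymbol_mul_apply (S N) hg a b).const_mul (N : ℂ)⁻¹)
      (fun _ _ => intervalIntegrable_const) m) a b
    rw [fCoeff_smul, Matrix.sub_apply, Matrix.smul_apply, smul_eq_mul] at h
    rw [← h, fCoeff, of_apply, mul_inv_cancel_left₀ (mod_cast Real.two_pi_pos.ne')]
  simpa only [hcoeff, sub_self, mul_zero] using ((tendsto_fCoeff_inv_smul_covariantSymbol_mul
    hg hC hS m a b).sub_const (fCoeff (fun _ => 1) m a b)).const_mul ((2 * π : ℝ) : ℂ)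

lemma tendsto_integral_trace_mul_of_mul_blockToeplitz_eq_one
    (hg : ∀ a b, IntervalIntegrable (fun θ => g θ a b) volume (-π) π)
    (hC : ∀ N, ‖S N‖ ≤ C) (hS : ∀ N, S N * blockToeplitz g N N = 1)
    (hq : ∀ a b, AEStronglyMeasurable (fun θ => q θ a b) (volume.restrict (Set.Ioc (-π) π)))
    {B : ℝ} (hB : ∀ a b, ∀ᵐ θ ∂volume.restrict (Set.Ioc (-π) π), ‖q θ a b‖ ≤ B) :
    Tendsto (fun N : ℕ => ∫ θ in (-π)..π,
      (((N : ℂ)⁻¹ • (covariantSymbol (S N) θ * g θ) - 1) * q θ).trace) atTop (𝓝 0) := by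
  let K : ℕ → ℝ → Matrix ρ ρ ℂ := fun N θ => (N : ℂ)⁻¹ • (covariantSymbol (S N) θ * g θ) - 1
  have hK (N : ℕ) (a b : ρ) : IntervalIntegrable (fun θ => K N θ a b) volume (-π) π :=
    ((intervalIntegrable_covariantSymbol_mul_apply (S N) hg a b).const_mul (N : ℂ)⁻¹).sub
      intervalIntegrable_const
  have hw (b : ρ) : IntervalIntegrable (fun θ => C * ∑ c, ‖g θ c b‖ + 1) volume (-π) π :=
    ((intervalIntegrable_finsetSum _ fun c _ => (hg c b).norm).const_mul C).add
      intervalIntegrable_const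
  have hKw (N : ℕ) (θ : ℝ) (a b : ρ) : ‖K N θ a b‖ ≤ ‖C * ∑ c, ‖g θ c b‖ + 1‖ :=
    (norm_inv_smul_covariantSymbol_mul_sub_one_apply_le _ (hC N) _ θ a b).trans (le_abs_self _)
  have hentry (a b : ρ) : Tendsto (fun N => ∫ θ in (-π)..π, K N θ a b * q θ b a) atTop (𝓝 0) :=
    tendsto_integral_mul_of_tendsto_fourier (hw b) (fun N => hK N a b) (fun N θ => hKw N θ a b)
      (fun m => tendsto_integral_inv_smul_covariantSymbol_mul_sub_one_mul_exp hg hC hS m a b)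
      (hq b a) (hB b a)
  have hKq (N : ℕ) (a b : ρ) : IntervalIntegrable (fun θ => K N θ a b * q θ b a) volume (-π) π := by
    have h := hK N a b
    rw [intervalIntegrable_iff_integrableOn_Ioc_of_le (neg_le_self Real.pi_pos.le)] at h ⊢
    exact h.mul_bdd (hq b a) (hB b a)
  have htrace (N : ℕ) : ∫ θ in (-π)..π, (K N θ * q θ).trace =
      ∑ a, ∑ b, ∫ θ in (-π)..π, K N θ a b * q θ b a := by
    simp only [trace, diag_apply, Matrix.mul_apply]
    rw [intervalIntegral.integral_finsetSum fun a _ =>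
      intervalIntegrable_finsetSum _ fun b _ => hKq N a b]
    exact Finset.sum_congr rfl fun a _ => intervalIntegral.integral_finsetSum fun b _ => hKq N a b
  refine Tendsto.congr (fun N => (htrace N).symm) ?_
  simpa only [Finset.sum_const_zero] using
    tendsto_finsetSum Finset.univ fun a _ => tendsto_finsetSum Finset.univ fun b _ => hentry a b

theorem tendsto_inv_mul_trace_of_mul_blockToeplitz_eq_one
    (hg : ∀ a b, IntervalIntegrable (fun θ => g θ a b) volume (-π) π)
    (hC : ∀ N, ‖S N‖ ≤ C) (hS : ∀ N, S N * blockToeplitz g N N = 1)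
    (hq : ∀ a b, AEStronglyMeasurable (fun θ => q θ a b) (volume.restrict (Set.Ioc (-π) π)))
    {B : ℝ} (hB : ∀ a b, ∀ᵐ θ ∂volume.restrict (Set.Ioc (-π) π), ‖q θ a b‖ ≤ B)
    (hgq : ∀ᵐ θ ∂volume.restrict (Set.Ioc (-π) π), g θ * q θ = 1) :
    Tendsto (fun N : ℕ => (N : ℂ)⁻¹ * (S N).trace) atTop
      (𝓝 (((2 * π : ℝ) : ℂ)⁻¹ * ∫ θ in (-π)..π, (q θ).trace)) := by
  have hqint : IntervalIntegrable (fun θ => (q θ).trace) volume (-π) π := by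
    simp only [trace, diag_apply, intervalIntegrable_iff_integrableOn_Ioc_of_le
      (neg_le_self Real.pi_pos.le)]
    exact integrable_finsetSum _ fun a _ => Integrable.of_bound (hq a a) B (hB a a)
  have hKq (N : ℕ) : ∫ θ in (-π)..π,
      (((N : ℂ)⁻¹ • (covariantSymbol (S N) θ * g θ) - 1) * q θ).trace =
        ((N : ℂ)⁻¹ * ∫ θ in (-π)..π, (covariantSymbol (S N) θ).trace) -
          ∫ θ in (-π)..π, (q θ).trace := by
    have hcov : IntervalIntegrable (fun θ => (covariantSymbol (S N) θ).trace) volume (-π) π :=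
      (continuous_covariantSymbol (S N)).matrix_trace.intervalIntegrable _ _
    rw [← intervalIntegral.integral_const_mul,
      ← intervalIntegral.integral_sub (hcov.const_mul _) hqint]
    refine intervalIntegral.integral_congr_ae ?_
    rw [Set.uIoc_of_le (neg_le_self Real.pi_pos.le)]
    filter_upwards [(ae_restrict_iff' measurableSet_Ioc).1 hgq] with θ hθ hmem
    rw [sub_mul, one_mul, smul_mul_assoc, Matrix.mul_assoc, hθ hmem, mul_one, trace_sub,
      trace_smul, smul_eq_mul]
  have h := ((tendsto_integral_trace_mul_of_mul_blockToeplitz_eq_one hg hC hS hq hB).add_const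
    (∫ θ in (-π)..π, (q θ).trace)).const_mul (((2 * π : ℝ) : ℂ)⁻¹)
  simpa only [hKq, sub_add_cancel, zero_add, trace_eq_integral_trace_covariantSymbol (S _),
    mul_left_comm _ (((2 * π : ℝ) : ℂ)⁻¹)] using h

end TraceAsymptotics

section Resolvent

lemma aemeasurable_matrix_inv_apply {α ι : Type*} [MeasurableSpace α] {μ : Measure α} [Fintype ι]
    [DecidableEq ι] {G : α → Matrix ι ι ℂ} (hG : ∀ a b, AEMeasurable (fun θ => G θ a b) μ)
    (a b : ι) : AEMeasurable (fun θ => (G θ)⁻¹ a b) μ := by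
  have hdet : Continuous fun M : ι → ι → ℂ => (Matrix.of M).det :=
    continuous_id.matrix_det
  have hadj : Continuous fun M : ι → ι → ℂ => (Matrix.of M).adjugate a b :=
    continuous_id.matrix_adjugate.matrix_elem a b
  have hG' : AEMeasurable (fun θ a b => G θ a b) μ :=
    aemeasurable_pi_iff.2 fun a => aemeasurable_pi_iff.2 fun b => hG a b
  refine ((hdet.measurable.inv.mul hadj.measurable).comp_aemeasurable hG').congr
    (.of_forall fun θ => ?_)
  simp only [Function.comp, Matrix.inv_def, Ring.inverse_eq_inv', Matrix.smul_apply, smul_eq_mul]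
  rfl

lemma abs_im_le_norm_ofReal_sub (x : ℝ) (z : ℂ) : |z.im| ≤ ‖(x : ℂ) - z‖ := by
  simpa using Complex.abs_im_le_norm (x - z)

lemma ofReal_sub_ne_zero {z : ℂ} (hz : z.im ≠ 0) (x : ℝ) : (x : ℂ) - z ≠ 0 :=
  norm_pos_iff.1 ((abs_pos.2 hz).trans_le (abs_im_le_norm_ofReal_sub x z))

lemma norm_inv_ofReal_sub_le {z : ℂ} (hz : z.im ≠ 0) (x : ℝ) : ‖((x : ℂ) - z)⁻¹‖ ≤ |z.im|⁻¹ := by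
  rw [norm_inv]
  exact inv_anti₀ (abs_pos.2 hz) (abs_im_le_norm_ofReal_sub x z)

variable {ι : Type*} [Fintype ι] [DecidableEq ι] {A : Matrix ι ι ℂ} {z : ℂ}

lemma sub_smul_one_eq (hA : A.IsHermitian) (z : ℂ) :
    A - z • 1 = (hA.eigenvectorUnitary : Matrix ι ι ℂ) *
      diagonal (fun i => (hA.eigenvalues i : ℂ) - z) *
        star (hA.eigenvectorUnitary : Matrix ι ι ℂ) := by
  have hspec := hA.spectral_theorem
  rw [Unitary.conjStarAlgAut_apply] at hspec
  have hdiag : diagonal (fun i => (hA.eigenvalues i : ℂ) - z) =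
      diagonal (RCLike.ofReal ∘ hA.eigenvalues) - z • (1 : Matrix ι ι ℂ) := by
    rw [smul_one_eq_diagonal, diagonal_sub]
    rfl
  rw [hdiag, Matrix.mul_sub, Matrix.sub_mul, ← hspec, Matrix.mul_smul, Matrix.smul_mul,
    Matrix.mul_one]
  exact congrArg (A - z • ·) (Unitary.coe_mul_star_self _).symm

lemma sub_smul_one_mul_conj_diagonal_inv (hA : A.IsHermitian) (hz : z.im ≠ 0) :
    (A - z • 1) * ((hA.eigenvectorUnitary : Matrix ι ι ℂ) *
      diagonal (fun i => ((hA.eigenvalues i : ℂ) - z)⁻¹) *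
        star (hA.eigenvectorUnitary : Matrix ι ι ℂ)) = 1 := by
  set U := hA.eigenvectorUnitary
  have hU : star (U : Matrix ι ι ℂ) * U = 1 := Unitary.coe_star_mul_self U
  have hdiag : diagonal (fun i => (hA.eigenvalues i : ℂ) - z) *
      diagonal (fun i => ((hA.eigenvalues i : ℂ) - z)⁻¹) = 1 := by
    simp [diagonal_mul_diagonal, mul_inv_cancel₀ (ofReal_sub_ne_zero hz _)]
  calc
    _ = (U : Matrix ι ι ℂ) * diagonal (fun i => (hA.eigenvalues i : ℂ) - z) *
        (star (U : Matrix ι ι ℂ) * U) * diagonal (fun i => ((hA.eigenvalues i : ℂ) - z)⁻¹) *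
          star (U : Matrix ι ι ℂ) := by
      rw [sub_smul_one_eq hA]
      simp only [Matrix.mul_assoc, U]
    _ = (U : Matrix ι ι ℂ) * 1 * star (U : Matrix ι ι ℂ) := by
      rw [hU, Matrix.mul_one, Matrix.mul_assoc (U : Matrix ι ι ℂ), hdiag]
    _ = 1 := by rw [Matrix.mul_one]; exact Unitary.coe_mul_star_self U

lemma inv_sub_smul_one_eq (hA : A.IsHermitian) (hz : z.im ≠ 0) :
    (A - z • 1)⁻¹ = (hA.eigenvectorUnitary : Matrix ι ι ℂ) *
      diagonal (fun i => ((hA.eigenvalues i : ℂ) - z)⁻¹) *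
        star (hA.eigenvectorUnitary : Matrix ι ι ℂ) :=
  inv_eq_right_inv (sub_smul_one_mul_conj_diagonal_inv hA hz)

lemma isUnit_det_sub_smul_one (hA : A.IsHermitian) (hz : z.im ≠ 0) : IsUnit (A - z • 1).det :=
  isUnit_det_of_right_inverse (sub_smul_one_mul_conj_diagonal_inv hA hz)

lemma trace_inv_sub_smul_one (hA : A.IsHermitian) (hz : z.im ≠ 0) :
    (A - z • 1)⁻¹.trace = ∑ i, ((hA.eigenvalues i : ℂ) - z)⁻¹ := by
  rw [inv_sub_smul_one_eq hA hz, trace_mul_comm, ← Matrix.mul_assoc, Unitary.coe_star_mul_self,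
    Matrix.one_mul, trace_diagonal]

open scoped Matrix.Norms.L2Operator in
lemma norm_inv_sub_smul_one_le (hA : A.IsHermitian) (hz : z.im ≠ 0) :
    ‖(A - z • 1)⁻¹‖ ≤ |z.im|⁻¹ := by
  rw [inv_sub_smul_one_eq hA hz, ← Unitary.coe_star, CStarRing.norm_mul_coe_unitary,
    CStarRing.norm_coe_unitary_mul, l2_opNorm_diagonal]
  exact (pi_norm_le_iff_of_nonneg (by positivity)).2 fun i => norm_inv_ofReal_sub_le hz _

end Resolvent

section ResolventMap

lemma span_topologicalClosure_eq_top_of_separatesPoints {X : Type*} [TopologicalSpace X]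
    [CompactSpace X] {s : Set C(X, ℂ)} (hone : 1 ∈ s) (hstar : ∀ f ∈ s, star f ∈ s)
    (hmul : ∀ f ∈ s, ∀ g ∈ s, f * g ∈ (Submodule.span ℂ s).topologicalClosure)
    (hsep : ∀ x y, x ≠ y → ∃ f ∈ s, f x ≠ f y) :
    (Submodule.span ℂ s).topologicalClosure = ⊤ := by
  set S := Submodule.span ℂ s
  have hclosed : IsClosed (S.topologicalClosure : Set C(X, ℂ)) := S.isClosed_topologicalClosure
  have hsub : s ⊆ S.topologicalClosure := Submodule.subset_span.trans S.le_topologicalClosure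
  have hmulS : S * S ≤ S.topologicalClosure := by
    rw [Submodule.span_mul_span]
    exact Submodule.span_le.2 (Set.mul_subset_iff.2 hmul)
  have hstarS : ∀ f ∈ S, star f ∈ S.topologicalClosure := fun f hf => by
    induction hf using Submodule.span_induction with
    | mem f hf => exact hsub (hstar f hf)
    | zero => simp
    | add f g _ _ hf hg => simpa using add_mem hf hg
    | smul c f _ hf => simpa using Submodule.smul_mem _ (star c) hf
  let A : StarSubalgebra ℂ C(X, ℂ) :=
    { S.topologicalClosure.toSubalgebra (hsub hone) fun f g hf hg =>
        hclosed.closure_subset (map_mem_closure₂ continuous_mul hf hg fun _ hf _ hg =>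
          hmulS (Submodule.mul_mem_mul hf hg)) with
      star_mem' := fun hf => hclosed.closure_subset (map_mem_closure continuous_star hf hstarS) }
  have hA : A.topologicalClosure = ⊤ :=
    ContinuousMap.starSubalgebra_topologicalClosure_eq_top_of_separatesPoints A fun x y hxy => by
      obtain ⟨f, hf, hfxy⟩ := hsep x y hxy
      exact ⟨f, ⟨f, hsub hf, rfl⟩, hfxy⟩
  refine eq_top_iff.2 fun f _ => hclosed.closure_subset ?_
  have hf : f ∈ A.topologicalClosure := hA ▸ trivial
  exact hf

lemma tendsto_inv_ofReal_sub_cocompact (z : ℂ) :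
    Tendsto (fun x : ℝ => ((x : ℂ) - z)⁻¹) (cocompact ℝ) (𝓝 0) := by
  refine tendsto_inv₀_cobounded.comp ?_
  rw [← tendsto_norm_atTop_iff_cobounded, ← Metric.cobounded_eq_cocompact]
  refine tendsto_atTop_mono (fun x => norm_sub_norm_le (x : ℂ) z)
    (tendsto_atTop_add_const_right _ (-‖z‖) ?_)
  simpa only [Complex.norm_real] using tendsto_norm_cobounded_atTop (E := ℝ)

variable {z w : ℂ}

/-- The resolvent function `x ↦ (x - z)⁻¹` of a non-real point `z`, extended by `0` to the
one-point compactification of the line, so that Stone–Weierstrass applies. -/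
def resolventMap (hz : z.im ≠ 0) : C(OnePoint ℝ, ℂ) :=
  OnePoint.continuousMapMk
    ⟨fun x : ℝ => ((x : ℂ) - z)⁻¹, by fun_prop (disch := exact ofReal_sub_ne_zero hz)⟩ 0
    (by rw [coclosedCompact_eq_cocompact]; exact tendsto_inv_ofReal_sub_cocompact z)

@[simp] lemma resolventMap_coe (hz : z.im ≠ 0) (x : ℝ) :
    resolventMap hz (x : OnePoint ℝ) = ((x : ℂ) - z)⁻¹ := rfl

@[simp] lemma resolventMap_infty (hz : z.im ≠ 0) : resolventMap hz OnePoint.infty = 0 := rfl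

lemma norm_resolventMap_le (hz : z.im ≠ 0) : ‖resolventMap hz‖ ≤ |z.im|⁻¹ := by
  refine (ContinuousMap.norm_le _ (by positivity)).2 fun x => ?_
  induction x using OnePoint.rec with
  | infty => simp
  | coe x => exact norm_inv_ofReal_sub_le hz x

lemma star_resolventMap (hz : z.im ≠ 0) :
    star (resolventMap hz) = resolventMap (z := star z) (by simpa using hz) := by
  ext x
  induction x using OnePoint.rec with
  | infty => simp
  | coe x => simp

lemma resolventMap_sub_resolventMap (hz : z.im ≠ 0) (hw : w.im ≠ 0) :
    resolventMap hz - resolventMap hw = (z - w) • (resolventMap hz * resolventMap hw) := by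
  ext x
  induction x using OnePoint.rec with
  | infty => simp
  | coe x =>
    have hxz := ofReal_sub_ne_zero hz x
    have hxw := ofReal_sub_ne_zero hw x
    simp only [ContinuousMap.sub_apply, ContinuousMap.smul_apply, ContinuousMap.mul_apply,
      resolventMap_coe, smul_eq_mul]
    field_simp
    ring

lemma injective_resolventMap (hz : z.im ≠ 0) : Function.Injective (resolventMap hz) := by
  intro x y hxy
  induction x using OnePoint.rec <;> induction y using OnePoint.rec
  all_goals simp_all [ofReal_sub_ne_zero hz, eq_comm (a := (0 : ℂ))]

lemma resolventMap_mul_mem_topologicalClosure_span {s : Set C(OnePoint ℝ, ℂ)}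
    (hs : ∀ (z : ℂ) (hz : z.im ≠ 0), resolventMap hz ∈ s) (hz : z.im ≠ 0) (hw : w.im ≠ 0) :
    resolventMap hz * resolventMap hw ∈ (Submodule.span ℂ s).topologicalClosure := by
  have hne {w : ℂ} (hw : w.im ≠ 0) (hzw : z ≠ w) :
      resolventMap hz * resolventMap hw ∈ Submodule.span ℂ s := by
    rw [← inv_smul_smul₀ (sub_ne_zero.2 hzw) (_ * _), ← resolventMap_sub_resolventMap]
    exact Submodule.smul_mem _ _ (sub_mem (Submodule.subset_span (hs z hz))
      (Submodule.subset_span (hs w hw)))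
  rcases ne_or_eq z w with hzw | rfl
  · exact Submodule.le_topologicalClosure _ (hne hw hzw)
  · have him (t : ℝ) : (z + t).im ≠ 0 := by simpa using hz
    have hlim : Tendsto (fun t : ℝ => resolventMap (him t)) (𝓝[≠] 0) (𝓝 (resolventMap hz)) := by
      refine tendsto_iff_dist_tendsto_zero.2 (squeeze_zero (fun _ => dist_nonneg)
        (g := fun t => |t| * (|z.im|⁻¹ * |z.im|⁻¹)) (fun t => ?_) ?_)
      · rw [dist_eq_norm, resolventMap_sub_resolventMap, norm_smul]
        gcongr
        · simp
        · refine (norm_mul_le _ _).trans ?_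
          gcongr
          · simpa using norm_resolventMap_le (him t)
          · exact norm_resolventMap_le hz
      · have := (continuous_abs.mul_const (|z.im|⁻¹ * |z.im|⁻¹)).tendsto (0 : ℝ)
        simpa using this.mono_left nhdsWithin_le_nhds
    refine mem_closure_of_tendsto (hlim.const_mul (resolventMap hz)) ?_
    filter_upwards [self_mem_nhdsWithin] with t ht
    exact hne (him t) (by simpa using ht)

lemma resolventMap_induction {p : C(OnePoint ℝ, ℂ) → Prop} (hone : p 1)
    (hres : ∀ (z : ℂ) (hz : z.im ≠ 0), p (resolventMap hz)) (hadd : ∀ φ ψ, p φ → p ψ → p (φ + ψ))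
    (hsmul : ∀ (c : ℂ) φ, p φ → p (c • φ)) (hclosed : IsClosed {φ | p φ}) (φ : C(OnePoint ℝ, ℂ)) :
    p φ := by
  let s : Set C(OnePoint ℝ, ℂ) := insert 1 {r | ∃ z : ℂ, ∃ hz : z.im ≠ 0, resolventMap hz = r}
  have hs (z : ℂ) (hz : z.im ≠ 0) : resolventMap hz ∈ s := Or.inr ⟨z, hz, rfl⟩
  have hdense : (Submodule.span ℂ s).topologicalClosure = ⊤ := by
    refine span_topologicalClosure_eq_top_of_separatesPoints (Or.inl rfl) ?_ ?_ fun x y hxy =>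
      ⟨_, hs Complex.I (by simp), (injective_resolventMap _).ne hxy⟩
    · rintro _ (rfl | ⟨z, hz, rfl⟩)
      · simp [s]
      · exact star_resolventMap hz ▸ hs _ _
    · have hsub : s ⊆ (Submodule.span ℂ s).topologicalClosure :=
        Submodule.subset_span.trans (Submodule.le_topologicalClosure _)
      rintro f (rfl | ⟨z, hz, rfl⟩) g (rfl | ⟨w, hw, rfl⟩)
      · exact hsub (by simp [s])
      · exact (one_mul (resolventMap hw)).symm ▸ hsub (hs w hw)
      · exact (mul_one (resolventMap hz)).symm ▸ hsub (hs z hz)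
      · exact resolventMap_mul_mem_topologicalClosure_span hs hz hw
  have hspan : (Submodule.span ℂ s : Set C(OnePoint ℝ, ℂ)) ⊆ {φ | p φ} := fun ψ hψ => by
    induction hψ using Submodule.span_induction with
    | mem ψ hψ =>
      rcases hψ with rfl | ⟨z, hz, rfl⟩
      exacts [hone, hres z hz]
    | zero => simpa using hsmul 0 1 hone
    | add φ ψ _ _ hφ hψ => exact hadd φ ψ hφ hψ
    | smul c φ _ hφ => exact hsmul c φ hφ
  have hφ : φ ∈ (Submodule.span ℂ s).topologicalClosure := hdense ▸ trivial
  exact closure_minimal hspan hclosed hφ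

end ResolventMap

section EigFunctional

variable {ι : Type*} [Fintype ι] [DecidableEq ι] {A : Matrix ι ι ℂ}

lemma eigSum_eq_sum_eigenvalues (hA : A.IsHermitian) (F : ℂ → ℂ) :
    eigSum F A = ∑ i, F (hA.eigenvalues i) := by
  simp [eigSum, hA.roots_charpoly_eq_eigenvalues]

lemma norm_eigSum_le (A : Matrix ι ι ℂ) {F : ℂ → ℂ} {C : ℝ} (hF : ∀ z, ‖F z‖ ≤ C) :
    ‖eigSum F A‖ ≤ Fintype.card ι * C := by
  have hC : 0 ≤ C := (norm_nonneg _).trans (hF 0)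
  have hcard : A.charpoly.roots.card ≤ Fintype.card ι :=
    A.charpoly.card_roots'.trans_eq A.charpoly_natDegree_eq_dim
  calc ‖eigSum F A‖ ≤ ((A.charpoly.roots.map F).map norm).sum := norm_multiset_sum_le _
    _ ≤ ((A.charpoly.roots.map F).map norm).card • C :=
      Multiset.sum_le_card_nsmul _ _ (by simpa using fun _ z _ _ h => h ▸ hF z)
    _ ≤ Fintype.card ι * C := by
      rw [Multiset.card_map, Multiset.card_map, nsmul_eq_mul]
      gcongr

/-- The linear functional `φ ↦ ∑ φ(Re λ)`, summed over the eigenvalues `λ` of `A`, on the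
continuous functions on the one-point compactification of the line. It is meant for Hermitian
`A`; taking real parts only makes it defined for every matrix. -/
def eigFunctional (A : Matrix ι ι ℂ) : C(OnePoint ℝ, ℂ) →L[ℂ] ℂ :=
  LinearMap.mkContinuous
    { toFun := fun φ => eigSum (fun z => φ (z.re : OnePoint ℝ)) A
      map_add' := fun _ _ => Multiset.sum_map_add
      map_smul' := fun _ _ => Multiset.sum_map_mul_left }
    (Fintype.card ι) fun φ => norm_eigSum_le A fun _ => φ.norm_coe_le_norm _

lemma eigFunctional_apply (A : Matrix ι ι ℂ) (φ : C(OnePoint ℝ, ℂ)) :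
    eigFunctional A φ = eigSum (fun z => φ (z.re : OnePoint ℝ)) A := rfl

lemma norm_eigFunctional_le (A : Matrix ι ι ℂ) : ‖eigFunctional A‖ ≤ Fintype.card ι :=
  LinearMap.mkContinuous_norm_le _ (by positivity) _

lemma eigFunctional_one (A : Matrix ι ι ℂ) : eigFunctional A 1 = Fintype.card ι := by
  simp [eigFunctional_apply, eigSum, ← (IsAlgClosed.splits A.charpoly).natDegree_eq_card_roots,
    A.charpoly_natDegree_eq_dim]

lemma eigFunctional_resolventMap (hA : A.IsHermitian) {z : ℂ} (hz : z.im ≠ 0) :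
    eigFunctional A (resolventMap hz) = (A - z • 1)⁻¹.trace := by
  simp [eigFunctional_apply, eigSum_eq_sum_eigenvalues hA, trace_inv_sub_smul_one hA hz]

lemma aemeasurable_eigFunctional {α : Type*} [MeasurableSpace α] {μ : Measure α}
    {G : α → Matrix ι ι ℂ} (hG : ∀ a b, AEMeasurable (fun θ => G θ a b) μ)
    (hherm : ∀ᵐ θ ∂μ, (G θ).IsHermitian) (φ : C(OnePoint ℝ, ℂ)) :
    AEMeasurable (fun θ => eigFunctional (G θ) φ) μ := by
  induction φ using resolventMap_induction with
  | hone => simpa only [eigFunctional_one] using aemeasurable_const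
  | hres z hz =>
    have htrace : AEMeasurable (fun θ => (G θ - z • 1)⁻¹.trace) μ :=
      Finset.aemeasurable_fun_sum _ fun a _ =>
        aemeasurable_matrix_inv_apply (fun a b => (hG a b).sub_const _) a a
    refine htrace.congr ?_
    filter_upwards [hherm] with θ hθ using (eigFunctional_resolventMap hθ hz).symm
  | hadd φ ψ hφ hψ =>
    simp only [map_add]
    exact hφ.add hψ
  | hsmul c φ hφ =>
    simp only [map_smul]
    exact hφ.const_smul c
  | hclosed =>
    refine IsSeqClosed.isClosed fun φ ψ hφ hlim => ?_
    exact aemeasurable_of_tendsto_metrizable_ae atTop hφ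
      (.of_forall fun θ => ((eigFunctional (G θ)).continuous.tendsto ψ).comp hlim)

end EigFunctional

lemma continuous_integral_clm_apply {α 𝕜 E F : Type*} [MeasurableSpace α] {μ : Measure α}
    [IsFiniteMeasure μ] [RCLike 𝕜] [NormedAddCommGroup E] [NormedSpace 𝕜 E]
    [NormedAddCommGroup F] [NormedSpace 𝕜 F] [NormedSpace ℝ F] {Λ : α → E →L[𝕜] F} {C : ℝ}
    (hmeas : ∀ x, AEStronglyMeasurable (fun θ => Λ θ x) μ) (hC : ∀ θ, ‖Λ θ‖ ≤ C) :
    Continuous fun x => ∫ θ, Λ θ x ∂μ := by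
  refine continuous_iff_continuousAt.2 fun x => continuousAt_of_dominated (.of_forall hmeas)
    (bound := fun _ => C * (‖x‖ + 1)) ?_ (integrable_const _)
    (.of_forall fun θ => (Λ θ).continuous.continuousAt)
  filter_upwards [Metric.ball_mem_nhds x one_pos] with y hy
  refine .of_forall fun θ => (Λ θ).le_of_opNorm_le_of_le (hC θ) ?_
  linarith [norm_le_norm_add_norm_sub' y x, mem_ball_iff_norm.1 hy]

section HermitianSymbol

variable {ρ : Type*} {G : ℝ → Matrix ρ ρ ℂ}

lemma isHermitian_blockToeplitz
    (hherm : ∀ᵐ θ ∂volume.restrict (Set.Ioc (-π) π), (G θ).IsHermitian) (N : ℕ) :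
    (blockToeplitz G N N).IsHermitian := by
  have hG : fCoeff (fun θ => (G θ)ᴴ) = fCoeff G := by
    ext k a b
    simp only [fCoeff, of_apply]
    congr 1
    refine intervalIntegral.integral_congr_ae ?_
    rw [Set.uIoc_of_le (neg_le_self Real.pi_pos.le)]
    filter_upwards [(ae_restrict_iff' measurableSet_Ioc).1 hherm] with θ hθ hmem
    rw [(hθ hmem).eq]
  rw [IsHermitian, blockToeplitz_conjTranspose, blockToeplitz, hG, blockToeplitz]

variable [Fintype ρ] [DecidableEq ρ]

lemma tendsto_inv_mul_eigFunctional_resolventMap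
    (hG : ∀ a b, IntervalIntegrable (fun θ => G θ a b) volume (-π) π)
    (hherm : ∀ᵐ θ ∂volume.restrict (Set.Ioc (-π) π), (G θ).IsHermitian) {z : ℂ} (hz : z.im ≠ 0) :
    Tendsto (fun N : ℕ => (N : ℂ)⁻¹ * eigFunctional (blockToeplitz G N N) (resolventMap hz)) atTop
      (𝓝 (((2 * π : ℝ) : ℂ)⁻¹ * ∫ θ in (-π)..π, eigFunctional (G θ) (resolventMap hz))) := by
  have hmeas (a b : ρ) : AEMeasurable (fun θ => (G θ - z • 1) a b)
      (volume.restrict (Set.Ioc (-π) π)) :=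
    (hG a b).1.aestronglyMeasurable.aemeasurable.sub_const _
  have hInt : ∫ θ in (-π)..π, eigFunctional (G θ) (resolventMap hz) =
      ∫ θ in (-π)..π, (G θ - z • 1)⁻¹.trace := by
    refine intervalIntegral.integral_congr_ae ?_
    rw [Set.uIoc_of_le (neg_le_self Real.pi_pos.le)]
    filter_upwards [(ae_restrict_iff' measurableSet_Ioc).1 hherm] with θ hθ hmem
    rw [eigFunctional_resolventMap (hθ hmem)]
  have hT := isHermitian_blockToeplitz hherm
  simp only [hInt, eigFunctional_resolventMap (hT _)]
  refine tendsto_inv_mul_trace_of_mul_blockToeplitz_eq_one (g := fun θ => G θ - z • 1)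
    (fun a b => (hG a b).sub intervalIntegrable_const)
    (fun N => norm_inv_sub_smul_one_le (hT N) hz) (fun N => ?_)
    (fun a b => (aemeasurable_matrix_inv_apply hmeas a b).aestronglyMeasurable)
    (B := |z.im|⁻¹) (fun a b => ?_) ?_
  · rw [blockToeplitz_sub_smul_one hG]
    exact nonsing_inv_mul _ (isUnit_det_sub_smul_one (hT N) hz)
  · filter_upwards [hherm] with θ hθ
    exact (norm_apply_le_l2_opNorm _ a b).trans (norm_inv_sub_smul_one_le hθ hz)
  · filter_upwards [hherm] with θ hθ using mul_nonsing_inv _ (isUnit_det_sub_smul_one hθ hz)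

lemma intervalIntegrable_eigFunctional
    (hG : ∀ a b, IntervalIntegrable (fun θ => G θ a b) volume (-π) π)
    (hherm : ∀ᵐ θ ∂volume.restrict (Set.Ioc (-π) π), (G θ).IsHermitian) (φ : C(OnePoint ℝ, ℂ)) :
    IntervalIntegrable (fun θ => eigFunctional (G θ) φ) volume (-π) π := by
  rw [intervalIntegrable_iff_integrableOn_Ioc_of_le (neg_le_self Real.pi_pos.le)]
  exact Integrable.of_bound (aemeasurable_eigFunctional
    (fun a b => (hG a b).1.aestronglyMeasurable.aemeasurable) hherm φ).aestronglyMeasurable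
    (Fintype.card ρ * ‖φ‖) (.of_forall fun θ =>
      (eigFunctional (G θ)).le_of_opNorm_le (norm_eigFunctional_le _) φ)

lemma equicontinuous_inv_mul_eigFunctional_blockToeplitz (G : ℝ → Matrix ρ ρ ℂ) :
    Equicontinuous fun (N : ℕ) φ => (N : ℂ)⁻¹ * eigFunctional (blockToeplitz G N N) φ := by
  let Λ (N : ℕ) : C(OnePoint ℝ, ℂ) →L[ℂ] ℂ := (N : ℂ)⁻¹ • eigFunctional (blockToeplitz G N N)
  have hΛ (N : ℕ) : ‖Λ N‖ ≤ Fintype.card ρ := by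
    calc ‖Λ N‖ ≤ (N : ℝ)⁻¹ * Fintype.card (Fin N × ρ) := by
          rw [norm_smul, norm_inv, Complex.norm_natCast]
          gcongr
          exact norm_eigFunctional_le _
      _ ≤ Fintype.card ρ := by
          rw [Fintype.card_prod, Fintype.card_fin, Nat.cast_mul, ← mul_assoc]
          exact mul_le_of_le_one_left (by positivity) inv_mul_le_one
  exact (show (∃ C, ∀ N, ‖Λ N‖ ≤ C) ↔ Equicontinuous ((↑) ∘ Λ) from
    (NormedSpace.equicontinuous_TFAE Λ).out 5 1).1 ⟨_, hΛ⟩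

theorem tendsto_inv_mul_eigFunctional_blockToeplitz
    (hG : ∀ a b, IntervalIntegrable (fun θ => G θ a b) volume (-π) π)
    (hherm : ∀ᵐ θ ∂volume.restrict (Set.Ioc (-π) π), (G θ).IsHermitian) (φ : C(OnePoint ℝ, ℂ)) :
    Tendsto (fun N : ℕ => (N : ℂ)⁻¹ * eigFunctional (blockToeplitz G N N) φ) atTop
      (𝓝 (((2 * π : ℝ) : ℂ)⁻¹ * ∫ θ in (-π)..π, eigFunctional (G θ) φ)) := by
  have hInt := intervalIntegrable_eigFunctional hG hherm
  induction φ using resolventMap_induction with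
  | hone =>
    have hπ : (π : ℂ) ≠ 0 := mod_cast Real.pi_ne_zero
    refine tendsto_const_nhds.congr' ?_
    filter_upwards [eventually_ne_atTop 0] with N hN
    have hN' : (N : ℂ) ≠ 0 := mod_cast hN
    simp only [eigFunctional_one, intervalIntegral.integral_const, Fintype.card_prod,
      Fintype.card_fin, Complex.real_smul]
    push_cast
    field_simp
    ring
  | hres z hz => exact tendsto_inv_mul_eigFunctional_resolventMap hG hherm hz
  | hadd φ ψ hφ hψ =>
    simpa only [map_add, mul_add, intervalIntegral.integral_add (hInt φ) (hInt ψ)]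
      using hφ.add hψ
  | hsmul c φ hφ =>
    simpa only [map_smul, smul_eq_mul, mul_left_comm _ c, intervalIntegral.integral_const_mul]
      using hφ.const_mul c
  | hclosed =>
    refine (equicontinuous_inv_mul_eigFunctional_blockToeplitz G).isClosed_setOfPred_tendsto
      (f := fun φ => ((2 * π : ℝ) : ℂ)⁻¹ *
      ∫ θ in (-π)..π, eigFunctional (G θ) φ) (continuous_const.mul ?_)
    simp only [intervalIntegral.integral_of_le (neg_le_self Real.pi_pos.le)]
    exact continuous_integral_clm_apply (fun φ => (hInt φ).1.aestronglyMeasurable) fun θ =>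
      norm_eigFunctional_le (G θ)

end HermitianSymbol

/-- The extension by `0` at infinity of a compactly supported continuous function on the line. -/
def extendByZero {F : ℝ → ℂ} (hF : Continuous F) (hsupp : HasCompactSupport F) :
    C(OnePoint ℝ, ℂ) :=
  OnePoint.continuousMapMk ⟨F, hF⟩ 0
    (by rw [coclosedCompact_eq_cocompact]; exact hsupp.is_zero_at_infty)

lemma eigFunctional_extendByZero {ι : Type*} [Fintype ι] [DecidableEq ι] {A : Matrix ι ι ℂ}
    (hA : A.IsHermitian) {F : ℂ → ℂ} (hF : Continuous fun x : ℝ => F x)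
    (hsupp : HasCompactSupport fun x : ℝ => F x) :
    eigFunctional A (extendByZero hF hsupp) = eigSum F A := by
  rw [eigFunctional_apply, eigSum_eq_sum_eigenvalues hA, eigSum_eq_sum_eigenvalues hA]
  rfl

lemma toReal_volume_Icc_neg_pi_pi : (volume (Set.Icc (-π) π)).toReal = 2 * π := by
  rw [Real.volume_Icc, ENNReal.toReal_ofReal (by linarith [Real.pi_pos])]
  ring

section HermitianSymbolDistribution

variable {ρ : Type*} [Fintype ρ] [DecidableEq ρ] {G : ℝ → Matrix ρ ρ ℂ} {F : ℂ → ℂ}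

lemma integrableOn_eigSum (hG : ∀ a b, IntervalIntegrable (fun θ => G θ a b) volume (-π) π)
    (hherm : ∀ᵐ θ ∂volume.restrict (Set.Icc (-π) π), (G θ).IsHermitian)
    (hF : Continuous fun x : ℝ => F x) (hsupp : HasCompactSupport fun x : ℝ => F x) :
    IntegrableOn (fun θ => eigSum F (G θ)) (Set.Icc (-π) π) := by
  rw [← Measure.restrict_congr_set Ioc_ae_eq_Icc] at hherm
  rw [integrableOn_Icc_iff_integrableOn_Ioc]
  refine (intervalIntegrable_eigFunctional hG hherm (extendByZero hF hsupp)).1.congr ?_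
  filter_upwards [hherm] with θ hθ using eigFunctional_extendByZero hθ hF hsupp

lemma tendsto_inv_mul_eigSum_blockToeplitz
    (hG : ∀ a b, IntervalIntegrable (fun θ => G θ a b) volume (-π) π)
    (hherm : ∀ᵐ θ ∂volume.restrict (Set.Icc (-π) π), (G θ).IsHermitian)
    (hF : Continuous fun x : ℝ => F x) (hsupp : HasCompactSupport fun x : ℝ => F x) :
    Tendsto (fun N : ℕ => (N : ℂ)⁻¹ * eigSum F (blockToeplitz G N N)) atTop
      (𝓝 (((2 * π : ℝ) : ℂ)⁻¹ * ∫ θ in Set.Icc (-π) π, eigSum F (G θ))) := by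
  rw [← Measure.restrict_congr_set Ioc_ae_eq_Icc] at hherm ⊢
  have hInt : ∫ θ in (-π)..π, eigFunctional (G θ) (extendByZero hF hsupp) =
      ∫ θ in Set.Ioc (-π) π, eigSum F (G θ) := by
    rw [intervalIntegral.integral_of_le (neg_le_self Real.pi_pos.le)]
    refine integral_congr_ae ?_
    filter_upwards [hherm] with θ hθ using eigFunctional_extendByZero hθ hF hsupp
  simpa only [hInt, eigFunctional_extendByZero (isHermitian_blockToeplitz hherm _)] using
    tendsto_inv_mul_eigFunctional_blockToeplitz hG hherm (extendByZero hF hsupp)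

end HermitianSymbolDistribution

theorem distributedEig_blockToeplitz {ρ : Type} [Fintype ρ] [DecidableEq ρ]
    {G : ℝ → Matrix ρ ρ ℂ} (hG : ∀ a b, IntervalIntegrable (fun θ => G θ a b) volume (-π) π)
    (hherm : ∀ᵐ θ ∂volume.restrict (Set.Icc (-π) π), (G θ).IsHermitian) :
    DistributedEig (Set.Icc (-π) π) G fun N => blockToeplitz G N N := by
  intro F hF hsupp
  have h := (tendsto_inv_mul_eigSum_blockToeplitz hG hherm (hF.comp Complex.continuous_ofReal)
    (hsupp.comp_isClosedEmbedding Complex.isometry_ofReal.isClosedEmbedding)).const_mul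
      ((Fintype.card ρ : ℂ)⁻¹)
  simpa only [toReal_volume_Icc_neg_pi_pi, integral_const_mul, Fintype.card_prod, Fintype.card_fin,
    Nat.cast_mul, _root_.mul_inv_rev, mul_assoc, mul_left_comm _ (((2 * π : ℝ) : ℂ)⁻¹)] using h

section HermitianDilation

/-- The Hermitian dilation of a rectangular matrix `A`, whose eigenvalues are `±σ` for the singular
values `σ` of `A`, completed by zeros. -/
def hermitianDilation {m n : Type*} (A : Matrix m n ℂ) : Matrix (m ⊕ n) (m ⊕ n) ℂ :=
  fromBlocks 0 A Aᴴ 0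

lemma isHermitian_hermitianDilation {m n : Type*} (A : Matrix m n ℂ) :
    (hermitianDilation A).IsHermitian := by
  simp [hermitianDilation, IsHermitian, fromBlocks_conjTranspose]

variable {m n : Type*} [Fintype m] [Fintype n] [DecidableEq m]

open Polynomial in
lemma charpoly_hermitianDilation_mul_X_pow [DecidableEq n] (A : Matrix m n ℂ) :
    (hermitianDilation A).charpoly * X ^ Fintype.card m =
      expand ℂ 2 (A * Aᴴ).charpoly * X ^ Fintype.card n := by
  have hmul : charmatrix (hermitianDilation A) *
      fromBlocks (Matrix.scalar m (X : ℂ[X])) 0 (Aᴴ.map C) 1 =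
        fromBlocks ((charmatrix (A * Aᴴ)).map (expand ℂ 2)) (-A.map C) 0 (Matrix.scalar n X) := by
    rw [hermitianDilation, charmatrix_fromBlocks, fromBlocks_multiply]
    congr 1
    · ext i j
      by_cases hij : i = j
      · simp [hij, charmatrix, Matrix.mul_apply, sub_eq_add_neg, pow_two]
      · simp [hij, charmatrix, Matrix.mul_apply]
    · simp
    · ext i j
      simp [charmatrix]
    · simp [charmatrix]
  have hexpand : expand ℂ 2 (charmatrix (A * Aᴴ)).det =
      ((charmatrix (A * Aᴴ)).map (expand ℂ 2)).det :=
    AlgHom.map_det _ _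
  have hdet := congrArg Matrix.det hmul
  rw [det_mul, det_fromBlocks_zero₁₂, det_fromBlocks_zero₂₁, ← hexpand] at hdet
  simpa [Matrix.charpoly] using hdet

lemma sum_eigenvalues_mul_conjTranspose_self (A : Matrix m n ℂ) (F : ℝ → ℂ) :
    ∑ i, F (√((isHermitian_mul_conjTranspose_self A).eigenvalues i)) =
      eigSum (fun z => F √z.re) (A * Aᴴ) := by
  simp [eigSum_eq_sum_eigenvalues (isHermitian_mul_conjTranspose_self A)]

open Polynomial ComplexOrder in
lemma roots_expand_two_of_posSemidef {B : Matrix m m ℂ} (hB : B.PosSemidef) :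
    (expand ℂ 2 B.charpoly).roots =
      Finset.univ.val.bind fun i =>
        {(√(hB.isHermitian.eigenvalues i) : ℂ), -(√(hB.isHermitian.eigenvalues i) : ℂ)} := by
  have hne (x : ℂ) : (X - C x) * (X - C (-x)) ≠ 0 :=
    mul_ne_zero (X_sub_C_ne_zero _) (X_sub_C_ne_zero _)
  have hprod : expand ℂ 2 B.charpoly =
      ∏ i, (X - C (√(hB.isHermitian.eigenvalues i) : ℂ)) *
        (X - C (-(√(hB.isHermitian.eigenvalues i) : ℂ))) := by
    rw [hB.isHermitian.charpoly_eq, map_prod]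
    refine Finset.prod_congr rfl fun i _ => ?_
    have hsq : (RCLike.ofReal (hB.isHermitian.eigenvalues i) : ℂ) =
        √(hB.isHermitian.eigenvalues i) * √(hB.isHermitian.eigenvalues i) := by
      rw [← Complex.ofReal_mul, Real.mul_self_sqrt (hB.eigenvalues_nonneg i)]
      rfl
    rw [map_sub, expand_X, expand_C, hsq, map_mul, map_neg]
    ring
  rw [hprod, roots_prod _ _ (Finset.prod_ne_zero_iff.2 fun i _ => hne _)]
  refine Multiset.bind_congr fun i _ => ?_
  rw [roots_mul (hne _), roots_X_sub_C, roots_X_sub_C]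
  rfl

variable [DecidableEq n]

open Polynomial ComplexOrder in
lemma eigSum_hermitianDilation (A : Matrix m n ℂ) (F : ℝ → ℂ) :
    eigSum (fun z => F |z.re|) (hermitianDilation A) + Fintype.card m * F 0 =
      2 * ∑ i, F (√((isHermitian_mul_conjTranspose_self A).eigenvalues i)) +
        Fintype.card n * F 0 := by
  have hX (p : ℂ[X]) (hp : p.Monic) (k : ℕ) :
      ((p * X ^ k).roots.map fun z : ℂ => F |z.re|).sum =
        (p.roots.map fun z : ℂ => F |z.re|).sum + k * F 0 := by
    rw [roots_mul (hp.mul (monic_X_pow k)).ne_zero, roots_X_pow]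
    simp [Multiset.map_nsmul, Multiset.sum_nsmul]
  have h := congrArg (fun p : ℂ[X] => (p.roots.map fun z : ℂ => F |z.re|).sum)
    (charpoly_hermitianDilation_mul_X_pow A)
  have hexpand : (((expand ℂ 2) (A * Aᴴ).charpoly).roots.map fun z : ℂ => F |z.re|).sum =
      2 * ∑ i, F (√((isHermitian_mul_conjTranspose_self A).eigenvalues i)) := by
    rw [roots_expand_two_of_posSemidef (posSemidef_self_mul_conjTranspose A), Finset.mul_sum]
    simp only [Multiset.map_bind, Multiset.sum_bind]
    refine Finset.sum_congr rfl fun i _ => ?_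
    simp [two_mul, abs_of_nonneg (Real.sqrt_nonneg _)]
  rwa [hX _ (charpoly_monic _), hX _ ((charpoly_monic _).expand two_pos), hexpand] at h

lemma two_mul_svSum (A : Matrix m n ℂ) (F : ℝ → ℂ) :
    2 * svSum F A = eigSum (fun z => F |z.re|) (hermitianDilation A) +
      (2 * (min (Fintype.card m) (Fintype.card n) : ℕ) - Fintype.card m - Fintype.card n) *
        F 0 := by
  have h := eigSum_hermitianDilation A F
  rw [svSum, Nat.cast_sub (min_le_left _ _), mul_sub]
  linear_combination -h

end HermitianDilation

section SingularValueDistribution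

variable {ρ τ : Type*} (f : ℝ → Matrix ρ τ ℂ)

lemma blockToeplitz_hermitianDilation (N : ℕ) :
    blockToeplitz (fun θ => hermitianDilation (f θ)) N N =
      reindex (Equiv.prodSumDistrib _ _ _).symm (Equiv.prodSumDistrib _ _ _).symm
        (hermitianDilation (blockToeplitz f N N)) := by
  ext ⟨i, a | a⟩ ⟨j, b | b⟩
  · simp [blockToeplitz, fCoeff, hermitianDilation]
  · rfl
  · exact congrFun₂ (blockToeplitz_conjTranspose f N N).symm (i, a) (j, b)
  · simp [blockToeplitz, fCoeff, hermitianDilation]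

variable {f}

lemma intervalIntegrable_hermitianDilation_apply
    (hf : ∀ a b, IntervalIntegrable (fun θ => f θ a b) volume (-π) π) (a b : ρ ⊕ τ) :
    IntervalIntegrable (fun θ => hermitianDilation (f θ) a b) volume (-π) π := by
  rcases a with a | a <;> rcases b with b | b
  · exact intervalIntegrable_const (c := (0 : ℂ))
  · exact hf a b
  · exact ⟨Complex.conjCLE.toContinuousLinearMap.integrable_comp (hf b a).1,
      Complex.conjCLE.toContinuousLinearMap.integrable_comp (hf b a).2⟩
  · exact intervalIntegrable_const (c := (0 : ℂ))

end SingularValueDistribution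

lemma hasCompactSupport_comp_abs {E : Type*} [Zero E] {F : ℝ → E} (hF : HasCompactSupport F) :
    HasCompactSupport fun x => F |x| := by
  obtain ⟨R, hR⟩ := hF.isCompact.isBounded.subset_closedBall 0
  refine HasCompactSupport.intro (isCompact_closedBall (0 : ℝ) R) fun x hx => ?_
  refine image_eq_zero_of_notMem_tsupport fun hmem => hx ?_
  simpa using hR hmem

lemma eigSum_reindex {m n : Type*} [Fintype m] [Fintype n] [DecidableEq m] [DecidableEq n]
    (e : m ≃ n) (A : Matrix m m ℂ) (F : ℂ → ℂ) : eigSum F (reindex e e A) = eigSum F A := by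
  rw [eigSum, eigSum, charpoly_reindex]

lemma two_mul_svSum_blockToeplitz {ρ τ : Type*} [Fintype ρ] [Fintype τ] [DecidableEq ρ]
    [DecidableEq τ] (f : ℝ → Matrix ρ τ ℂ) (N : ℕ) (F : ℝ → ℂ) :
    2 * svSum F (blockToeplitz f N N) =
      eigSum (fun z => F |z.re|) (blockToeplitz (fun θ => hermitianDilation (f θ)) N N) +
        N * ((2 * (min (Fintype.card ρ) (Fintype.card τ) : ℕ) - Fintype.card ρ - Fintype.card τ) *
          F 0) := by
  rw [two_mul_svSum, blockToeplitz_hermitianDilation, eigSum_reindex]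
  simp only [Fintype.card_prod, Fintype.card_fin, Nat.mul_min_mul_left]
  push_cast
  ring

lemma tendsto_inv_mul_svSum_blockToeplitz {ρ τ : Type*} [Fintype ρ] [Fintype τ] [DecidableEq ρ]
    {f : ℝ → Matrix ρ τ ℂ} (hf : ∀ a b, IntervalIntegrable (fun θ => f θ a b) volume (-π) π)
    {F : ℝ → ℂ} (hF : Continuous F) (hsupp : HasCompactSupport F) :
    Tendsto (fun N : ℕ => (N : ℂ)⁻¹ * svSum F (blockToeplitz f N N)) atTop
      (𝓝 (((2 * π : ℝ) : ℂ)⁻¹ * ∫ θ in Set.Icc (-π) π, svSum F (f θ))) := by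
  classical
  have hG := intervalIntegrable_hermitianDilation_apply hf
  have hherm : ∀ᵐ θ ∂volume.restrict (Set.Icc (-π) π), (hermitianDilation (f θ)).IsHermitian :=
    .of_forall fun θ => isHermitian_hermitianDilation (f θ)
  have hFabs : Continuous fun x : ℝ => F |(x : ℂ).re| := hF.comp continuous_abs
  have hsuppabs : HasCompactSupport fun x : ℝ => F |(x : ℂ).re| := hasCompactSupport_comp_abs hsupp
  generalize hc : (2 * (min (Fintype.card ρ) (Fintype.card τ) : ℕ) - Fintype.card ρ -
    Fintype.card τ : ℂ) * F 0 = c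
  have hsv (θ : ℝ) : svSum F (f θ) =
      2⁻¹ * (eigSum (fun z => F |z.re|) (hermitianDilation (f θ)) + c) := by
    rw [← hc, ← two_mul_svSum, inv_mul_cancel_left₀ two_ne_zero]
  have hπ : ((2 * π : ℝ) : ℂ) ≠ 0 := mod_cast Real.two_pi_pos.ne'
  have hmean : ((2 * π : ℝ) : ℂ)⁻¹ * ∫ θ in Set.Icc (-π) π, svSum F (f θ) =
      2⁻¹ * (((2 * π : ℝ) : ℂ)⁻¹ *
        (∫ θ in Set.Icc (-π) π, eigSum (fun z => F |z.re|) (hermitianDilation (f θ))) + c) := by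
    simp only [hsv]
    rw [integral_const_mul, integral_add (integrableOn_eigSum hG hherm hFabs hsuppabs)
      (integrable_const c), setIntegral_const, measureReal_def, toReal_volume_Icc_neg_pi_pi,
      Complex.real_smul, mul_left_comm, mul_add, inv_mul_cancel_left₀ hπ]
  rw [hmean]
  refine (((tendsto_inv_mul_eigSum_blockToeplitz hG hherm hFabs hsuppabs).add_const c).const_mul
    2⁻¹).congr' ?_
  filter_upwards [eventually_ne_atTop 0] with N hN
  have hN' : (N : ℂ) ≠ 0 := mod_cast hN
  have hsvN := two_mul_svSum_blockToeplitz f N F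
  rw [hc] at hsvN
  rw [← mul_right_inj' (two_ne_zero (α := ℂ)), mul_inv_cancel_left₀ two_ne_zero, mul_left_comm,
    hsvN, mul_add, inv_mul_cancel_left₀ hN']

theorem distributedSV_blockToeplitz {ρ τ : Type} [Fintype ρ] [Fintype τ] [DecidableEq ρ]
    {f : ℝ → Matrix ρ τ ℂ} (hf : ∀ a b, IntervalIntegrable (fun θ => f θ a b) volume (-π) π) :
    DistributedSV (Set.Icc (-π) π) f fun N => blockToeplitz f N N := by
  intro F hF hsupp
  have h := (tendsto_inv_mul_svSum_blockToeplitz hf hF hsupp).const_mul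
    ((min (Fintype.card ρ) (Fintype.card τ) : ℕ) : ℂ)⁻¹
  simpa only [toReal_volume_Icc_neg_pi_pi, integral_const_mul, Fintype.card_prod, Fintype.card_fin,
    Nat.mul_min_mul_left, Nat.cast_mul, _root_.mul_inv_rev, mul_assoc,
    mul_left_comm _ (((2 * π : ℝ) : ℂ)⁻¹)] using h

section Reindexing

variable {Θ : Type*} [MeasureSpace Θ] {Ω : Set Θ} {ι ι' κ κ' : ℕ → Type}

lemma DistributedEig.submatrix {ρ : Type*} [Fintype ρ] [DecidableEq ρ] {f : Θ → Matrix ρ ρ ℂ}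
    [∀ n, Fintype (ι n)] [∀ n, DecidableEq (ι n)] [∀ n, Fintype (ι' n)] [∀ n, DecidableEq (ι' n)]
    {A : ∀ n, Matrix (ι n) (ι n) ℂ} (hA : DistributedEig Ω f A) (e : ∀ n, ι' n ≃ ι n) :
    DistributedEig Ω f fun n => (A n).submatrix (e n) (e n) := fun F hF hsupp => by
  simpa only [Fintype.card_congr (e _), ← eigSum_reindex (e _).symm, reindex_apply,
    Equiv.symm_symm] using hA F hF hsupp

lemma svSum_submatrix {m n m' n' : Type*} [Fintype m] [Fintype n] [Fintype m'] [Fintype n']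
    [DecidableEq m] [DecidableEq m'] (F : ℝ → ℂ) (A : Matrix m n ℂ) (e : m' ≃ m) (e' : n' ≃ n) :
    svSum F (A.submatrix e e') = svSum F A := by
  have hmul : A.submatrix e e' * (A.submatrix e e')ᴴ =
      reindex e.symm e.symm (A * Aᴴ) := by
    rw [conjTranspose_submatrix, submatrix_mul_equiv, reindex_apply, Equiv.symm_symm]
  rw [svSum, svSum, sum_eigenvalues_mul_conjTranspose_self, sum_eigenvalues_mul_conjTranspose_self,
    hmul, eigSum_reindex, Fintype.card_congr e, Fintype.card_congr e']

lemma DistributedSV.submatrix {ρ τ : Type*} [Fintype ρ] [Fintype τ] [DecidableEq ρ]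
    {f : Θ → Matrix ρ τ ℂ} [∀ n, Fintype (ι n)] [∀ n, DecidableEq (ι n)] [∀ n, Fintype (ι' n)]
    [∀ n, DecidableEq (ι' n)] [∀ n, Fintype (κ n)] [∀ n, Fintype (κ' n)]
    {A : ∀ n, Matrix (ι n) (κ n) ℂ} (hA : DistributedSV Ω f A) (e : ∀ n, ι' n ≃ ι n)
    (e' : ∀ n, κ' n ≃ κ n) :
    DistributedSV Ω f fun n => (A n).submatrix (e n) (e' n) := fun F hF hsupp => by
  simpa only [svSum_submatrix, Fintype.card_congr (e _), Fintype.card_congr (e' _)]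
    using hA F hF hsupp

end Reindexing

section BlockMatrix

/-- The reordering `((i, k), a) ↦ (k, (i, a))` of the rows of `blockMatEq` that turns it into a
block Toeplitz matrix. -/
def toeplitzEquiv (ν N s : ℕ) : (Fin ν × Fin N) × Fin s ≃ Fin N × (Fin ν × Fin s) :=
  ((Equiv.prodComm _ _).prodCongr (Equiv.refl _)).trans (Equiv.prodAssoc _ _ _)

variable {ν s t : ℕ} (f : Fin ν → Fin ν → ℝ → Matrix (Fin s) (Fin t) ℂ) (N : ℕ)

lemma blockMatEq_eq_submatrix : blockMatEq ν s t f N =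
    (blockToeplitz (blockSymbol ν s t f) N N).submatrix (toeplitzEquiv ν N s)
      (toeplitzEquiv ν N t) := rfl

lemma permPi_eq_toMatrix (ν N μ : ℕ) : permPi ν N μ =
    ((Equiv.prodComm (Fin N) (Fin ν)).prodCongr (Equiv.refl (Fin μ))).toPEquiv.toMatrix := by
  ext ⟨⟨k, i⟩, a⟩ ⟨⟨j, l⟩, b⟩
  simp only [permPi, kroneckerMap_apply, of_apply, PEquiv.toMatrix_apply, Matrix.one_apply,
    mul_ite, mul_one, mul_zero]
  simp [← ite_and, and_comm]

lemma permPi_mul_blockMatEq_mul_transpose :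
    permPi ν N s * blockMatEq ν s t f N * (permPi ν N t)ᵀ = toeplitzOfBlockSymbol ν s t f N := by
  rw [permPi_eq_toMatrix, permPi_eq_toMatrix, ← PEquiv.toMatrix_symm, ← Equiv.toPEquiv_symm,
    PEquiv.toMatrix_toPEquiv_mul, PEquiv.mul_toMatrix_toPEquiv]
  rfl

end BlockMatrix

/-- for equal block sizes `n_1 = ⋯ = n_ν = n(ν) = N`, the permuted
block matrix satisfies `Π_s A_n Π_tᵀ = T_N(F)` with `F = (f_{i,j})_{i,j=1}^ν`; hence
`{A_n}_n ∼_σ F`, and, when `F` is Hermitian-valued (which forces `s = t`),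
`{A_n}_n ∼_λ F`. -/
theorem equal_blocks_basic
    (ν s t : ℕ) (hν : 2 ≤ ν) (hs : 0 < s) (ht : 0 < t)
    (f : Fin ν → Fin ν → ℝ → Matrix (Fin s) (Fin t) ℂ)
    (hf : ∀ i j a b, IntervalIntegrable (fun θ => f i j θ a b) volume (-π) π) :
    (∀ N : ℕ,
      permPi ν N s * blockMatEq ν s t f N * (permPi ν N t)ᵀ =
        toeplitzOfBlockSymbol ν s t f N) ∧
    DistributedSV (Set.Icc (-π) π) (blockSymbol ν s t f)
      (fun N => blockMatEq ν s t f N) ∧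
    (∀ hst : s = t,
      (∀ θ ∈ Set.Icc (-π) π,
        ((blockSymbol ν s t f θ).submatrix id
          (Prod.map id (Fin.cast hst))).IsHermitian) →
      DistributedEig (Set.Icc (-π) π)
        (fun θ => (blockSymbol ν s t f θ).submatrix id (Prod.map id (Fin.cast hst)))
        (fun N => (blockMatEq ν s t f N).submatrix id
          (Prod.map id (Fin.cast hst)))) := by
  have hF (p : Fin ν × Fin s) (q : Fin ν × Fin t) :
      IntervalIntegrable (fun θ => blockSymbol ν s t f θ p q) volume (-π) π :=
    hf p.1 q.1 p.2 q.2
  refine ⟨permPi_mul_blockMatEq_mul_transpose f, ?_, ?_⟩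
  · simp only [blockMatEq_eq_submatrix]
    exact (distributedSV_blockToeplitz hF).submatrix (fun N => toeplitzEquiv ν N s) fun N =>
      toeplitzEquiv ν N t
  · rintro rfl hherm
    simp only [blockMatEq_eq_submatrix]
    exact (distributedEig_blockToeplitz hF
      ((ae_restrict_mem measurableSet_Icc).mono hherm)).submatrix fun N => toeplitzEquiv ν N s

end
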